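/- Let a > −1, μ ∈ {0,1}, m ≥ 1, n = 2m + μ, let k ≥ 0 be an integer and 0 < s < 1. For an integer j, define A_j = ∫_{(−1,1)^n} 1[ #{i : |x_i| < s} = j ] · ∏_{i=1}^{n} (1 − x_i²)^a · ∏_{1≤i<l≤n} |x_l − x_i| dx and Z₁ = ∫_{(−1,1)^n} ∏_{i=1}^{n} (1 − x_i²)^a · ∏_{1≤i<l≤n} |x_l − x_i| dx, with the convention A_j = 0 for j < 0. Further define B_k = ∫_{(0,1)^m} 1[ #{i : y_i < s²} = k ] · ∏_{i=1}^{m} y_i^{μ−1/2} (1 − y_i)^{2a+1} · ∏_{1≤i<l≤m} (y_l − y_i)² dy and Z₂ = ∫_{(0,1)^m} ∏_{i=1}^{m} y_i^{μ−1/2} (1 − y_i)^{2a+1} · ∏_{1≤i<l≤m} (y_l − y_i)² dy. Then all these integrals are finite, Z₁ > 0, Z₂ > 0, and (A_{2k+μ−1} + A_{2k+μ}) / Z₁ = B_k / Z₂. -/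

import Mathlib

open MeasureTheory

/-- The integrand of the symmetric Jacobi OE gap-counting integral `A_j` on `(-1,1)^n`. -/
noncomputable def joeGapIntegrand (n : ℕ) (a : ℝ) (s : ℝ) (j : ℤ) (x : Fin n → ℝ) : ℝ :=
  if ((Finset.univ.filter fun i => |x i| < s).card : ℤ) = j then
    (∏ i, (1 - (x i) ^ 2) ^ a) * ∏ k, ∏ l ∈ Finset.Iio k, |x k - x l|
  else 0

/-- The integrand of the symmetric Jacobi OE normalization `Z₁`. -/
noncomputable def joeTotalIntegrand (n : ℕ) (a : ℝ) (x : Fin n → ℝ) : ℝ :=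
  (∏ i, (1 - (x i) ^ 2) ^ a) * ∏ k, ∏ l ∈ Finset.Iio k, |x k - x l|

/-- The integrand of the Jacobi UE gap-counting integral `B_k` on `(0,1)^m`. -/
noncomputable def jueGapIntegrand (m μ : ℕ) (a : ℝ) (c : ℝ) (k : ℕ) (y : Fin m → ℝ) : ℝ :=
  if (Finset.univ.filter fun i => y i < c).card = k then
    (∏ i, (y i) ^ ((μ : ℝ) - 1 / 2) * (1 - y i) ^ (2 * a + 1)) *
      ∏ i, ∏ l ∈ Finset.Iio i, (y i - y l) ^ 2
  else 0

/-- The integrand of the Jacobi UE normalization `Z₂`. -/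
noncomputable def jueTotalIntegrand (m μ : ℕ) (a : ℝ) (y : Fin m → ℝ) : ℝ :=
  (∏ i, (y i) ^ ((μ : ℝ) - 1 / 2) * (1 - y i) ^ (2 * a + 1)) *
    ∏ i, ∏ l ∈ Finset.Iio i, (y i - y l) ^ 2

/-!
By the symmetry of the weight, the signs of the `xᵢ` can be summed out first. For fixed
`0 < t₀ < ⋯ < tₙ₋₁` the sum over all signs of the absolute Vandermonde determinant is the
determinant of the matrix `(1 + (-1) ^ (i + j)) tᵢ ^ j`, whose entries vanish in a checkerboard
pattern; it therefore factorises into generalised Vandermonde determinants of the two interlacing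
families of `tᵢ` with `i ≡ μ` and `i ≢ μ` modulo `2`. Integrating the second family `q` over the
gaps left by the first family `p` gives a determinant of incomplete moments of the weight, and
integration by parts turns these moments into a second Vandermonde determinant in `p ^ 2`. Hence
`y = p ^ 2` is distributed as the unitary ensemble. If `N` of the `tᵢ` lie below `s`, then
`⌊(N + 1 - μ) / 2⌋` of the `pᵢ` do, which is `k` exactly when `N` is `2 * k + μ - 1` or `2 * k + μ`.
-/

open scoped ENNReal

section ProductMeasures

variable {X : Type*} [MeasurableSpace X] {n : ℕ}

lemma lintegral_fin_nat_prod_eq_prod (ν : Fin n → Measure X) [∀ i, SigmaFinite (ν i)]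
    {f : Fin n → X → ℝ≥0∞} (hf : ∀ i, Measurable (f i)) :
    ∫⁻ x, ∏ i, f i (x i) ∂Measure.pi ν = ∏ i, ∫⁻ t, f i t ∂ν i := by
  induction n with
  | zero => simp
  | succ n ih =>
    have hrest : Measurable fun y : Fin n → X => ∏ i, f i.succ (y i) := by fun_prop
    have hsplit := ((measurePreserving_piFinSuccAbove ν 0).symm _).lintegral_comp_emb
      (MeasurableEquiv.piFinSuccAbove _ 0).symm.measurableEmbedding fun x => ∏ i, f i (x i)
    rw [← hsplit, Fin.prod_univ_succ, ← ih (fun i => ν i.succ) fun i => hf i.succ]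
    simp only [MeasurableEquiv.piFinSuccAbove_symm_apply, Fin.insertNthEquiv_zero,
      Fin.consEquiv_apply, Fin.prod_univ_succ, Fin.cons_zero, Fin.cons_succ, Fin.succAbove_zero]
    exact lintegral_prod_mul (hf 0).aemeasurable hrest.aemeasurable

lemma pi_withDensity (ν : Fin n → Measure X) [∀ i, SigmaFinite (ν i)] {f : Fin n → X → ℝ≥0∞}
    (hf : ∀ i, Measurable (f i)) [∀ i, SigmaFinite ((ν i).withDensity (f i))] :
    Measure.pi (fun i => (ν i).withDensity (f i)) =
      (Measure.pi ν).withDensity fun x => ∏ i, f i (x i) := by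
  refine Measure.pi_eq fun s hs => ?_
  rw [withDensity_apply _ (.univ_pi hs), Measure.restrict_pi_pi,
    lintegral_fin_nat_prod_eq_prod _ hf]
  exact Finset.prod_congr rfl fun i _ => (withDensity_apply _ (hs i)).symm

lemma pi_eval_eq_null [MeasurableEq X] (ν : Fin n → Measure X)
    [∀ i, SigmaFinite (ν i)] [∀ i, NullSingletonClass (ν i)] {i j : Fin n} (hij : i ≠ j) :
    Measure.pi ν {x | x i = x j} = 0 := by
  obtain _ | n := n
  · exact i.elim0
  obtain ⟨j, rfl⟩ := Fin.exists_succAbove_eq hij.symm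
  have hmeas : MeasurableSet {p : X × (Fin n → X) | p.1 = p.2 j} :=
    measurableSet_eq_fun measurable_fst (by fun_prop)
  have hpre := (measurePreserving_piFinSuccAbove ν i).measure_preimage hmeas.nullMeasurableSet
  refine hpre.trans ((Measure.measure_prod_null hmeas).2 (.of_forall fun t => ?_))
  exact (congrArg _ (Set.ext fun y => eq_comm)).trans
    (Measure.pi_hyperplane (fun k => ν (i.succAbove k)) j t)

lemma ae_injective_pi [MeasurableEq X] (ν : Fin n → Measure X) [∀ i, SigmaFinite (ν i)]
    [∀ i, NullSingletonClass (ν i)] : ∀ᵐ x ∂Measure.pi ν, Function.Injective x := by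
  have hne : ∀ᵐ x ∂Measure.pi ν, ∀ i j, i ≠ j → x i ≠ x j := by
    simp only [ae_all_iff]
    intro i j hij
    simpa [ae_iff] using pi_eval_eq_null ν hij
  filter_upwards [hne] with x hx i j hij
  exact not_imp_not.1 (hx i j) hij

end ProductMeasures

section FundamentalDomains

open DomMulAct

variable {ι : Type*} {n : ℕ}

instance {X : Type*} [MeasurableSpace X] :
    MeasurableConstSMul (Equiv.Perm ι)ᵈᵐᵃ (ι → X) where
  measurable_const_smul σ := measurable_pi_lambda _ fun i => measurable_pi_apply (mk.symm σ i)

instance [Fintype ι] {X : Type*} [MeasurableSpace X] (ν : Measure X) [SigmaFinite ν] :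
    SMulInvariantMeasure (Equiv.Perm ι)ᵈᵐᵃ (ι → X) (Measure.pi fun _ => ν) where
  measure_preimage_smul σ s hs := by
    have hmp := measurePreserving_piCongrLeft (fun _ : ι => ν) (mk.symm σ).symm
    refine Eq.trans (congrArg _ (congrArg (· ⁻¹' s) ?_)) (hmp.measure_preimage hs.nullMeasurableSet)
    ext x i
    have h := Equiv.piCongrLeft_apply_apply (fun _ => X) (mk.symm σ).symm x (mk.symm σ i)
    rw [Equiv.symm_apply_apply] at h
    exact h.symm

lemma measurePreserving_intUnits_smul (ν : Measure ℝ) [ν.IsNegInvariant] (ε : ℤˣ) :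
    MeasurePreserving (fun x : ℝ => ε • x) ν ν := by
  obtain rfl | rfl := Int.units_eq_one_or ε
  · simpa only [one_smul] using! MeasurePreserving.id ν
  · simpa only [Units.neg_smul, one_smul] using Measure.measurePreserving_neg ν

instance [Fintype ι] (ν : Measure ℝ) [SigmaFinite ν]
    [ν.IsNegInvariant] : SMulInvariantMeasure (ι → ℤˣ) (ι → ℝ) (Measure.pi fun _ => ν) where
  measure_preimage_smul ε _ hs :=
    (measurePreserving_pi _ _ fun i =>
      measurePreserving_intUnits_smul ν (ε i)).measure_preimage hs.nullMeasurableSet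

lemma measurableSet_strictMono : MeasurableSet {x : Fin n → ℝ | StrictMono x} := by
  simp only [StrictMono, Set.ofPred_forall]
  exact .iInter fun i => .iInter fun j => .iInter fun _ =>
    measurableSet_lt (measurable_pi_apply i) (measurable_pi_apply j)

lemma isFundamentalDomain_strictMono (ν : Measure ℝ) [SigmaFinite ν] [NullSingletonClass ν] :
    IsFundamentalDomain (Equiv.Perm (Fin n))ᵈᵐᵃ {x : Fin n → ℝ | StrictMono x}
      (Measure.pi fun _ => ν) where
  nullMeasurableSet := measurableSet_strictMono.nullMeasurableSet
  ae_covers := by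
    filter_upwards [ae_injective_pi fun _ : Fin n => ν] with x hx
    exact ⟨mk (Tuple.sort x),
      (Tuple.monotone_sort x).strictMono_of_injective (hx.comp (Tuple.sort x).injective)⟩
  aedisjoint := by
    refine fun σ τ hστ => Disjoint.aedisjoint (Set.disjoint_left.2 fun x hσ hτ => hστ ?_)
    rw [Set.mem_smul_set_iff_inv_smul_mem] at hσ hτ
    have hσ' : StrictMono (x ∘ (mk.symm σ⁻¹ : Equiv.Perm (Fin n))) := hσ
    have hτ' : StrictMono (x ∘ (mk.symm τ⁻¹ : Equiv.Perm (Fin n))) := hτ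
    have hcomp := Tuple.unique_monotone hσ'.monotone hτ'.monotone
    have hx : Function.Injective x := (Equiv.injective_comp (mk.symm σ⁻¹) x).1 hσ'.injective
    exact inv_injective (mk.symm.injective (Equiv.coe_fn_injective (hx.comp_left hcomp)))

lemma isFundamentalDomain_pos [Fintype ι] (ν : Measure ℝ) [SigmaFinite ν] [NullSingletonClass ν] :
    IsFundamentalDomain (ι → ℤˣ) {x : ι → ℝ | ∀ i, 0 < x i} (Measure.pi fun _ => ν) where
  nullMeasurableSet := by
    simp only [Set.ofPred_forall]
    exact (MeasurableSet.iInter fun i =>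
      measurableSet_lt measurable_const (measurable_pi_apply i)).nullMeasurableSet
  ae_covers := by
    have hne : ∀ᵐ x ∂Measure.pi fun _ : ι => ν, ∀ i, x i ≠ 0 :=
      ae_all_iff.2 fun i => Measure.ae_eval_ne (μ := fun _ : ι => ν) i 0
    filter_upwards [hne] with x hx
    refine ⟨fun i => if 0 < x i then 1 else -1, fun i => ?_⟩
    rcases (hx i).lt_or_gt with h | h
    · simp [h.le.not_gt, h]
    · simp [h]
  aedisjoint := by
    refine fun ε δ hεδ => Disjoint.aedisjoint (Set.disjoint_left.2 fun x hε hδ => hεδ ?_)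
    rw [Set.mem_smul_set_iff_inv_smul_mem] at hε hδ
    funext i
    have hεi : 0 < (ε i)⁻¹ • x i := hε i
    have hδi : 0 < (δ i)⁻¹ • x i := hδ i
    rcases Int.units_eq_one_or (ε i) with h | h <;>
      rcases Int.units_eq_one_or (δ i) with h' | h' <;>
      simp only [h, h', inv_one, Int.units_inv_eq_self, Units.neg_smul, one_smul] at hεi hδi ⊢ <;>
      linarith

lemma lintegral_pi_eq_factorial_mul_setLIntegral (ν : Measure ℝ) [SigmaFinite ν]
    [NullSingletonClass ν] {f : (Fin n → ℝ) → ℝ≥0∞}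
    (hf : ∀ (σ : Equiv.Perm (Fin n)) x, f (x ∘ σ) = f x) :
    ∫⁻ x, f x ∂Measure.pi (fun _ => ν) =
      n.factorial * ∫⁻ x in {x | StrictMono x}, f x ∂Measure.pi fun _ => ν := by
  have hinv (σ : (Equiv.Perm (Fin n))ᵈᵐᵃ) (x : Fin n → ℝ) : f (σ • x) = f x := hf (mk.symm σ) x
  let _ : Fintype (Equiv.Perm (Fin n))ᵈᵐᵃ := Fintype.ofEquiv _ mk
  have hcard : Fintype.card (Equiv.Perm (Fin n))ᵈᵐᵃ = n.factorial := by
    rw [← Fintype.card_congr mk, Fintype.card_perm, Fintype.card_fin]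
  rw [(isFundamentalDomain_strictMono ν).lintegral_eq_tsum'' f, tsum_fintype]
  simp only [hinv, Finset.sum_const, Finset.card_univ, hcard, nsmul_eq_mul]

lemma lintegral_pi_eq_lintegral_sum_signs [Fintype ι] [DecidableEq ι] (ν : Measure ℝ)
    [SigmaFinite ν] [NullSingletonClass ν] [ν.IsNegInvariant] {f : (ι → ℝ) → ℝ≥0∞}
    (hf : Measurable f) :
    ∫⁻ x, f x ∂Measure.pi (fun _ => ν) =
      ∫⁻ t, ∑ ε : ι → ℤˣ, f (ε • t) ∂Measure.pi fun _ => ν.restrict (Set.Ioi 0) := by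
  have hpos : {x : ι → ℝ | ∀ i, 0 < x i} = Set.univ.pi fun _ => Set.Ioi 0 := by ext; simp
  rw [(isFundamentalDomain_pos ν).lintegral_eq_tsum'' f, tsum_fintype, hpos,
    Measure.restrict_pi_pi]
  exact (lintegral_finsetSum _ fun ε _ => hf.comp (measurable_const_smul ε)).symm

end FundamentalDomains

section Signs

open Matrix

variable {m μ n : ℕ}

/-- Interleaving of two families of indices: the first one goes to the places of the parity of `μ`,
the second one to the remaining places. -/
noncomputable def interleaveEquiv (m : ℕ) (hμ : μ ≤ 1) : Fin m ⊕ Fin (m + μ) ≃ Fin (2 * m + μ) :=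
  Equiv.ofBijective (Sum.elim (fun i => ⟨2 * i + μ, by omega⟩) fun i => ⟨2 * i + (1 - μ), by omega⟩)
    (by
      rw [Fintype.bijective_iff_injective_and_card]
      refine ⟨?_, by simp only [Fintype.card_sum, Fintype.card_fin]; omega⟩
      rintro (i | i) (j | j) h <;> simp at h ⊢ <;> omega)

lemma coe_interleaveEquiv_inl (hμ : μ ≤ 1) (i : Fin m) :
    (interleaveEquiv m hμ (.inl i) : ℕ) = 2 * i + μ := rfl

lemma coe_interleaveEquiv_inr (hμ : μ ≤ 1) (i : Fin (m + μ)) :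
    (interleaveEquiv m hμ (.inr i) : ℕ) = 2 * i + (1 - μ) := rfl

/-- The generalised Vandermonde matrix of the monomials of degrees `c`, `c + 2`, `c + 4`, …. -/
def parityVandermonde (c : ℕ) (v : Fin n → ℝ) : Matrix (Fin n) (Fin n) ℝ :=
  of fun i j => v i ^ (2 * (j : ℕ) + c)

lemma det_parityVandermonde (c : ℕ) (v : Fin n → ℝ) :
    (parityVandermonde c v).det = (∏ i, v i ^ c) * (vandermonde (v ^ 2)).det := by
  rw [← det_mul_column]
  congr with i j
  simp only [parityVandermonde, of_apply, vandermonde_apply, Pi.pow_apply, pow_add, pow_mul,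
    mul_comm (v i ^ c)]

lemma det_vandermonde_pos {v : Fin n → ℝ} (hv : StrictMono v) : 0 < (vandermonde v).det := by
  rw [det_vandermonde]
  exact Finset.prod_pos fun i _ => Finset.prod_pos fun j hj => sub_pos.2 (hv (Finset.mem_Ioi.1 hj))

lemma det_of_sum {R ι α : Type*} [CommRing R] [Fintype ι] [DecidableEq ι] [Fintype α]
    (f : ι → α → ι → R) :
    (of fun i j => ∑ e, f i e j).det = ∑ ε : ι → α, (of fun i j => f i (ε i) j).det := by
  have h := (detRowAlternating (R := R) (n := ι)).toMultilinearMap.map_sum (α := fun _ => α) f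
  exact (congrArg det (by ext i j; simp)).trans h

lemma abs_intUnits_smul_sub {x y : ℝ} (hx : 0 < x) (hxy : x < y) (ε δ : ℤˣ) :
    |ε • y - δ • x| = ((ε : ℤ) : ℝ) * (ε • y - δ • x) := by
  obtain rfl | rfl := Int.units_eq_one_or ε <;> obtain rfl | rfl := Int.units_eq_one_or δ <;>
    simp only [Units.neg_smul, one_smul, Units.val_neg, Units.val_one, Int.cast_neg, Int.cast_one]
  · rw [abs_of_pos (by linarith), one_mul]
  · rw [abs_of_pos (by linarith), one_mul]
  · rw [abs_of_neg (by linarith), neg_one_mul]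
  · rw [abs_of_neg (by linarith), neg_one_mul]

lemma abs_det_vandermonde_signs_smul {t : Fin n → ℝ} (ht : StrictMono t) (h0 : ∀ i, 0 < t i)
    (ε : Fin n → ℤˣ) :
    |(vandermonde (ε • t)).det| =
      (of fun i j : Fin n => ((ε i : ℤ) : ℝ) ^ (i : ℕ) * (ε i • t i) ^ (j : ℕ)).det := by
  have hsigns : ∏ i : Fin n, ((ε i : ℤ) : ℝ) ^ (i : ℕ) =
      ∏ i, ∏ j ∈ Finset.Ioi i, ((ε j : ℤ) : ℝ) := by
    rw [Finset.prod_comm' (t' := Finset.univ) (s' := Finset.Iio) (by simp)]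
    simp
  trans (∏ i : Fin n, ((ε i : ℤ) : ℝ) ^ (i : ℕ)) * (vandermonde (ε • t)).det
  · simp only [det_vandermonde, Finset.abs_prod, hsigns, ← Finset.prod_mul_distrib]
    refine Finset.prod_congr rfl fun i _ => Finset.prod_congr rfl fun j hj => ?_
    exact abs_intUnits_smul_sub (h0 i) (ht (Finset.mem_Ioi.1 hj)) (ε j) (ε i)
  · rw [← det_mul_column]
    rfl

lemma sum_intUnits_pow_mul_smul_pow (i j : ℕ) (x : ℝ) :
    ∑ e : ℤˣ, ((e : ℤ) : ℝ) ^ i * (e • x) ^ j = (1 + (-1) ^ (i + j)) * x ^ j := by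
  have huniv : (Finset.univ : Finset ℤˣ) = {1, -1} := rfl
  rw [huniv, Finset.sum_pair (by decide)]
  simp only [Units.neg_smul, one_smul, Units.val_neg, Units.val_one, Int.cast_neg, Int.cast_one]
  rw [neg_pow x j, one_pow, pow_add]
  ring

lemma det_checkerboard (hμ : μ ≤ 1) (t : Fin (2 * m + μ) → ℝ) :
    (of fun i j : Fin (2 * m + μ) => (1 + (-1) ^ (i + j : ℕ)) * t i ^ (j : ℕ)).det =
      2 ^ (2 * m + μ) * ((parityVandermonde μ (t ∘ interleaveEquiv m hμ ∘ .inl)).det *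
        (parityVandermonde (1 - μ) (t ∘ interleaveEquiv m hμ ∘ .inr)).det) := by
  have hblocks :
      (of fun i j : Fin (2 * m + μ) => (1 + (-1) ^ (i + j : ℕ)) * t i ^ (j : ℕ)).submatrix
        (interleaveEquiv m hμ) (interleaveEquiv m hμ) =
      (2 : ℝ) • fromBlocks (parityVandermonde μ (t ∘ interleaveEquiv m hμ ∘ .inl)) 0 0
        (parityVandermonde (1 - μ) (t ∘ interleaveEquiv m hμ ∘ .inr)) := by
    ext (i | i) (j | j)
    · have h : Even (2 * (i : ℕ) + μ + (2 * j + μ)) := by grind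
      simp [parityVandermonde, coe_interleaveEquiv_inl, h.neg_one_pow, one_add_one_eq_two]
    · have h : Odd (2 * (i : ℕ) + μ + (2 * j + (1 - μ))) := by grind
      simp [coe_interleaveEquiv_inl, coe_interleaveEquiv_inr, h.neg_one_pow]
    · have h : Odd (2 * (i : ℕ) + (1 - μ) + (2 * j + μ)) := by grind
      simp [coe_interleaveEquiv_inl, coe_interleaveEquiv_inr, h.neg_one_pow]
    · have h : Even (2 * (i : ℕ) + (1 - μ) + (2 * j + (1 - μ))) := by grind
      simp [parityVandermonde, coe_interleaveEquiv_inr, h.neg_one_pow, one_add_one_eq_two]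
  rw [← det_submatrix_equiv_self (interleaveEquiv m hμ), hblocks, det_smul, det_fromBlocks_zero₂₁]
  simp only [Fintype.card_sum, Fintype.card_fin, two_mul, add_assoc]

theorem sum_signs_abs_det_vandermonde (hμ : μ ≤ 1) {t : Fin (2 * m + μ) → ℝ} (ht : StrictMono t)
    (h0 : ∀ i, 0 < t i) :
    ∑ ε : Fin (2 * m + μ) → ℤˣ, |(vandermonde (ε • t)).det| =
      2 ^ (2 * m + μ) * ((parityVandermonde μ (t ∘ interleaveEquiv m hμ ∘ .inl)).det *
        (parityVandermonde (1 - μ) (t ∘ interleaveEquiv m hμ ∘ .inr)).det) := by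
  simp only [abs_det_vandermonde_signs_smul ht h0, ← det_checkerboard,
    ← sum_intUnits_pow_mul_smul_pow]
  exact (det_of_sum fun (i : Fin (2 * m + μ)) (e : ℤˣ) (j : Fin (2 * m + μ)) =>
    ((e : ℤ) : ℝ) ^ (i : ℕ) * (e • t i) ^ (j : ℕ)).symm

end Signs

section Interlacing

variable {m μ n : ℕ}

/-- The family obtained from `p` and `q` by interleaving their entries. -/
noncomputable def interleave (hμ : μ ≤ 1) (p : Fin m → ℝ) (q : Fin (m + μ) → ℝ) :
    Fin (2 * m + μ) → ℝ :=
  Sum.elim p q ∘ (interleaveEquiv m hμ).symm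

lemma interleave_comp_inl (hμ : μ ≤ 1) (p : Fin m → ℝ) (q : Fin (m + μ) → ℝ) :
    interleave hμ p q ∘ interleaveEquiv m hμ ∘ .inl = p := by
  ext i; simp [interleave]

lemma interleave_comp_inr (hμ : μ ≤ 1) (p : Fin m → ℝ) (q : Fin (m + μ) → ℝ) :
    interleave hμ p q ∘ interleaveEquiv m hμ ∘ .inr = q := by
  ext i; simp [interleave]

/-- The points lying above `l i` and below all later entries of `l`. -/
def gap (l : Fin n → ℝ) (i : Fin n) : Set ℝ := {u | l i < u ∧ ∀ j, i < j → u < l j}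

/-- The lower endpoints of the gaps containing the `m + μ` points that interlace `p`: the entries
of `p`, preceded by `0` when `μ = 1`. -/
def lowerEndpoints (μ : ℕ) (p : Fin m → ℝ) (i : Fin (m + μ)) : ℝ :=
  if h : μ ≤ i then p (i.subNat μ h) else 0

lemma lowerEndpoints_addNat (p : Fin m → ℝ) (i : Fin m) :
    lowerEndpoints μ p (i.addNat μ) = p i := by
  simp [lowerEndpoints]

lemma lowerEndpoints_nonneg {p : Fin m → ℝ} (h0 : ∀ i, 0 ≤ p i) (i : Fin (m + μ)) :
    0 ≤ lowerEndpoints μ p i := by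
  unfold lowerEndpoints
  split_ifs
  exacts [h0 _, le_rfl]

lemma lowerEndpoints_strictMono (hμ : μ ≤ 1) {p : Fin m → ℝ} (hp : StrictMono p)
    (h0 : ∀ i, 0 < p i) : StrictMono (lowerEndpoints μ p) := by
  intro i j hij
  have hj : μ ≤ j := by omega
  simp only [lowerEndpoints, hj, dif_pos]
  split_ifs with hi
  · exact hp (by simp only [Fin.lt_def, Fin.val_subNat]; omega)
  · exact h0 _

lemma strictMono_interleave_iff (hμ : μ ≤ 1) {p : Fin m → ℝ} {q : Fin (m + μ) → ℝ}
    (hp : ∀ i, 0 < p i) (hq : ∀ i, 0 < q i) :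
    StrictMono (interleave hμ p q) ↔
      StrictMono p ∧ q ∈ Set.univ.pi (gap (lowerEndpoints μ p)) := by
  have hiff : StrictMono (interleave hμ p q) ↔ ∀ x y : Fin m ⊕ Fin (m + μ),
      interleaveEquiv m hμ x < interleaveEquiv m hμ y → Sum.elim p q x < Sum.elim p q y := by
    simp only [StrictMono, (interleaveEquiv m hμ).forall_congr_left, interleave,
      Function.comp_apply, Equiv.apply_symm_apply]
  simp only [hiff, Sum.forall, Sum.elim_inl, Sum.elim_inr, Fin.lt_def, coe_interleaveEquiv_inl,
    coe_interleaveEquiv_inr]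
  constructor
  · intro h
    refine ⟨fun i j hij => (h.1 i).1 j (by omega), fun i _ => ⟨?_, fun j hij => ?_⟩⟩
    · by_cases hi : μ ≤ i
      · rw [lowerEndpoints, dif_pos hi]
        exact (h.1 _).2 i (by rw [Fin.val_subNat]; omega)
      · simpa [lowerEndpoints, hi] using hq i
    · have hj : μ ≤ j := by omega
      rw [lowerEndpoints, dif_pos hj]
      exact (h.2 i).1 _ (by rw [Fin.val_subNat]; omega)
  · rintro ⟨hmono, hgap⟩
    have hl := lowerEndpoints_strictMono hμ hmono hp
    have hlt (i j : Fin (m + μ)) (hij : i < j) : q i < lowerEndpoints μ p j :=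
      (hgap i trivial).2 j hij
    have hgt (i : Fin (m + μ)) : lowerEndpoints μ p i < q i := (hgap i trivial).1
    refine ⟨fun i => ⟨fun j hij => hmono (by omega), fun j hij => ?_⟩,
      fun i => ⟨fun j hij => ?_, fun j hij => (hlt i j (by omega)).trans (hgt j)⟩⟩
    · rw [← lowerEndpoints_addNat (μ := μ) p i]
      exact (hl.monotone (by simp only [Fin.le_def, Fin.val_addNat]; omega)).trans_lt (hgt j)
    · rw [← lowerEndpoints_addNat (μ := μ) p j]
      exact hlt i _ (by simp only [Fin.lt_def, Fin.val_addNat]; omega)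

lemma measurePreserving_interleave (hμ : μ ≤ 1) (ν : Measure ℝ) [SigmaFinite ν] :
    MeasurePreserving (fun z : (Fin m → ℝ) × (Fin (m + μ) → ℝ) => interleave hμ z.1 z.2)
      ((Measure.pi fun _ => ν).prod (Measure.pi fun _ => ν)) (Measure.pi fun _ => ν) := by
  have h := (measurePreserving_piCongrLeft (fun _ => ν) (interleaveEquiv m hμ)).comp
    (measurePreserving_sumPiEquivProdPi_symm fun _ : Fin m ⊕ Fin (m + μ) => ν)
  convert h using 1
  ext z i
  obtain ⟨x, rfl⟩ := (interleaveEquiv m hμ).surjective i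
  have h' := Equiv.piCongrLeft_apply_apply (fun _ => ℝ) (interleaveEquiv m hμ) (Sum.elim z.1 z.2) x
  simp only [interleave, Function.comp_apply, Equiv.symm_apply_apply]
  rw [← h']
  congr

lemma setLIntegral_prod_of_slices {X Y : Type*} [MeasurableSpace X] [MeasurableSpace Y]
    {ρ : Measure X} {τ : Measure Y} [SFinite τ] {A : Set X} {B : X → Set Y} (hA : MeasurableSet A)
    (hB : ∀ x, MeasurableSet (B x))
    (hAB : MeasurableSet {z : X × Y | z.1 ∈ A ∧ z.2 ∈ B z.1}) {f : X × Y → ℝ≥0∞}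
    (hf : Measurable f) :
    ∫⁻ z in {z : X × Y | z.1 ∈ A ∧ z.2 ∈ B z.1}, f z ∂ρ.prod τ =
      ∫⁻ x in A, ∫⁻ y in B x, f (x, y) ∂τ ∂ρ := by
  rw [← lintegral_indicator hAB, lintegral_prod _ (hf.indicator hAB).aemeasurable,
    ← lintegral_indicator hA]
  congr with x
  by_cases hx : x ∈ A
  · simp only [Set.indicator_of_mem hx, ← lintegral_indicator (hB x)]
    congr with y
    by_cases hy : y ∈ B x <;> simp [hx, hy]
  · simp [hx, Set.indicator]

lemma measurableSet_gap (l : Fin n → ℝ) (i : Fin n) : MeasurableSet (gap l i) := by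
  simp only [gap, Set.ofPred_and, Set.ofPred_forall]
  exact measurableSet_Ioi.inter (.iInter fun j => .iInter fun _ => measurableSet_Iio)

@[fun_prop]
lemma measurable_lowerEndpoints : Measurable fun p : Fin m → ℝ => lowerEndpoints μ p := by
  refine measurable_pi_lambda _ fun i => ?_
  unfold lowerEndpoints
  split_ifs
  · exact measurable_pi_apply _
  · exact measurable_const

lemma measurableSet_strictMono_and_mem_gap :
    MeasurableSet {z : (Fin m → ℝ) × (Fin (m + μ) → ℝ) |
      z.1 ∈ {p : Fin m → ℝ | StrictMono p} ∧ z.2 ∈ Set.univ.pi (gap (lowerEndpoints μ z.1))} := by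
  have hl (i : Fin (m + μ)) : Measurable fun z : (Fin m → ℝ) × (Fin (m + μ) → ℝ) =>
    lowerEndpoints μ z.1 i := by fun_prop
  have hq (i : Fin (m + μ)) : Measurable fun z : (Fin m → ℝ) × (Fin (m + μ) → ℝ) => z.2 i := by
    fun_prop
  have hgap : MeasurableSet {z : (Fin m → ℝ) × (Fin (m + μ) → ℝ) |
      z.2 ∈ Set.univ.pi (gap (lowerEndpoints μ z.1))} := by
    simp only [gap, Set.mem_univ_pi, Set.mem_ofPred_eq]
    simp only [Set.ofPred_forall, Set.ofPred_and]
    exact .iInter fun i => (measurableSet_lt (hl i) (hq i)).inter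
      (.iInter fun j => .iInter fun _ => measurableSet_lt (hq i) (hl j))
  exact (measurableSet_strictMono.preimage measurable_fst).inter hgap

theorem setLIntegral_strictMono_interleave (hμ : μ ≤ 1) {ν : Measure ℝ} [SigmaFinite ν]
    (hν : ∀ᵐ u ∂ν, 0 < u) {f : (Fin (2 * m + μ) → ℝ) → ℝ≥0∞} (hf : Measurable f) :
    ∫⁻ t in {t | StrictMono t}, f t ∂Measure.pi (fun _ => ν) =
      ∫⁻ p in {p : Fin m → ℝ | StrictMono p}, ∫⁻ q in Set.univ.pi (gap (lowerEndpoints μ p)),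
        f (interleave hμ p q) ∂Measure.pi (fun _ => ν) ∂Measure.pi fun _ => ν := by
  have hmp := measurePreserving_interleave (m := m) hμ ν
  have hpos : ∀ᵐ t ∂Measure.pi fun _ : Fin (2 * m + μ) => ν, ∀ i, 0 < t i :=
    ae_all_iff.2 fun i => (Measure.quasiMeasurePreserving_eval _ i).ae hν
  have hpre : (fun z : (Fin m → ℝ) × (Fin (m + μ) → ℝ) => interleave hμ z.1 z.2) ⁻¹'
      {t | StrictMono t} =ᵐ[(Measure.pi fun _ => ν).prod (Measure.pi fun _ => ν)]
      {z | z.1 ∈ {p : Fin m → ℝ | StrictMono p} ∧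
        z.2 ∈ Set.univ.pi (gap (lowerEndpoints μ z.1))} := by
    filter_upwards [hmp.quasiMeasurePreserving.ae hpos] with z hz
    refine propext (strictMono_interleave_iff hμ (fun i => ?_) fun i => ?_)
    · rw [← interleave_comp_inl hμ z.1 z.2]
      exact hz _
    · rw [← interleave_comp_inr hμ z.1 z.2]
      exact hz _
  rw [← hmp.setLIntegral_comp_preimage measurableSet_strictMono hf, setLIntegral_congr hpre]
  exact setLIntegral_prod_of_slices (B := fun p => Set.univ.pi (gap (lowerEndpoints μ p)))
    measurableSet_strictMono
    (fun p => .univ_pi fun i => measurableSet_gap _ i) measurableSet_strictMono_and_mem_gap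
    (hf.comp hmp.measurable)

end Interlacing

section DeterminantsOfIntegrals

open Matrix

variable {n : ℕ}

section Andreief

variable {ι X : Type*} [Fintype ι] [DecidableEq ι] {f : ι → X → ℝ}

lemma det_of_apply_eq_sum (q : ι → X) :
    (of fun i j => f j (q i)).det =
      ∑ σ : Equiv.Perm ι, ((Equiv.Perm.sign σ : ℤ) : ℝ) * ∏ i, f (σ i) (q i) := by
  rw [← det_transpose, det_apply']
  rfl

variable [MeasurableSpace X] {ν : ι → Measure X} [∀ i, SigmaFinite (ν i)]

lemma integrable_det (hf : ∀ i j, Integrable (f j) (ν i)) :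
    Integrable (fun q : ι → X => (of fun i j => f j (q i)).det) (Measure.pi ν) := by
  simp only [det_of_apply_eq_sum]
  exact integrable_finsetSum _ fun σ _ =>
    (Integrable.fintype_prod_dep fun i => hf i (σ i)).const_mul _

lemma integral_det (hf : ∀ i j, Integrable (f j) (ν i)) :
    ∫ q : ι → X, (of fun i j => f j (q i)).det ∂Measure.pi ν =
      (of fun i j => ∫ u, f j u ∂ν i).det := by
  have hint (σ : Equiv.Perm ι) : Integrable
      (fun q : ι → X => ((Equiv.Perm.sign σ : ℤ) : ℝ) * ∏ i, f (σ i) (q i)) (Measure.pi ν) :=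
    (Integrable.fintype_prod_dep fun i => hf i (σ i)).const_mul _
  simp only [det_of_apply_eq_sum]
  rw [integral_finsetSum _ fun σ _ => hint σ, ← det_transpose, det_apply']
  refine Finset.sum_congr rfl fun σ _ => ?_
  rw [integral_const_mul, integral_fintype_prod_eq_prod fun i => f (σ i)]
  rfl

end Andreief

lemma det_eq_of_forall_row_eq_sub_succ {R : Type*} [CommRing R]
    {A B : Matrix (Fin (n + 1)) (Fin (n + 1)) R}
    (hlast : A (Fin.last n) = B (Fin.last n))
    (hstep : ∀ i : Fin n, A i.castSucc = B i.castSucc - B i.succ) : A.det = B.det := by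
  rw [← det_submatrix_equiv_self Fin.revPerm A, ← det_submatrix_equiv_self Fin.revPerm B]
  refine (det_eq_of_forall_row_eq_smul_add_pred (fun _ => 1) (fun j => ?_) fun i j => ?_).symm
  · simp [hlast]
  · simp [Fin.rev_succ, Fin.rev_castSucc, hstep]

lemma gap_last (l : Fin (n + 1) → ℝ) : gap l (Fin.last n) = Set.Ioi (l (Fin.last n)) := by
  ext u
  simp [gap, Fin.le_last]

lemma gap_castSucc {l : Fin (n + 1) → ℝ} (hl : StrictMono l) (i : Fin n) :
    gap l i.castSucc = Set.Ioo (l i.castSucc) (l i.succ) := by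
  ext u
  refine and_congr_right fun _ => ⟨fun h => h _ i.castSucc_lt_succ, fun h j hj => ?_⟩
  exact h.trans_le (hl.monotone (Fin.castSucc_lt_iff_succ_le.1 hj))

lemma det_setIntegral_gap {ν : Measure ℝ} [NullSingletonClass ν] {f : Fin n → ℝ → ℝ}
    (hf : ∀ j, Integrable (f j) ν) {l : Fin n → ℝ} (hl : StrictMono l) :
    (of fun i j => ∫ u in gap l i, f j u ∂ν).det =
      (of fun i j => ∫ u in Set.Ioi (l i), f j u ∂ν).det := by
  obtain _ | n := n
  · simp
  refine det_eq_of_forall_row_eq_sub_succ ?_ fun i => ?_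
  · ext j
    simp [gap_last]
  · ext j
    have hle : l i.castSucc ≤ l i.succ := (hl i.castSucc_lt_succ).le
    simp only [of_apply, Pi.sub_apply, gap_castSucc hl]
    rw [← integral_Ioc_eq_integral_Ioo, ← Set.Ioc_union_Ioi_eq_Ioi hle,
      setIntegral_union (Set.Ioc_disjoint_Ioi le_rfl) measurableSet_Ioi (hf j).integrableOn
        (hf j).integrableOn, add_sub_cancel_right]

theorem setLIntegral_gaps_ofReal_det {ν : Measure ℝ} [SigmaFinite ν] [NullSingletonClass ν]
    {f : Fin n → ℝ → ℝ} (hf : ∀ j, Integrable (f j) ν) {l : Fin n → ℝ} (hl : StrictMono l)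
    (hpos : ∀ q ∈ Set.univ.pi (gap l), 0 ≤ (of fun i j => f j (q i)).det) :
    ∫⁻ q in Set.univ.pi (gap l), ENNReal.ofReal (of fun i j => f j (q i)).det
        ∂Measure.pi (fun _ => ν) =
      ENNReal.ofReal (of fun i j => ∫ u in Set.Ioi (l i), f j u ∂ν).det := by
  have hint (i j : Fin n) : Integrable (f j) (ν.restrict (gap l i)) := (hf j).restrict
  have hmeas : MeasurableSet (Set.univ.pi (gap l)) := .univ_pi fun i => measurableSet_gap l i
  rw [← ofReal_integral_eq_lintegral_ofReal _
    ((ae_restrict_iff' hmeas).2 (.of_forall hpos)), Measure.restrict_pi_pi, integral_det hint,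
    det_setIntegral_gap hf hl]
  rw [Measure.restrict_pi_pi]
  exact integrable_det hint

end DeterminantsOfIntegrals

lemma neZero_withDensity {X : Type*} [MeasurableSpace X] {ρ : Measure X} [NeZero ρ] {f : X → ℝ≥0∞}
    (hf : AEMeasurable f ρ) (h0 : ∀ᵐ x ∂ρ, f x ≠ 0) : NeZero (ρ.withDensity f) :=
  ⟨fun h => NeZero.ne ρ <| Measure.absolutelyContinuous_zero_iff.1 <|
    h ▸ withDensity_absolutelyContinuous' hf h0⟩

section JacobiMeasure

/-- The symmetric Jacobi weight `(1 - x ^ 2) ^ a` on `(-1, 1)`, as a measure on `ℝ`. -/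
noncomputable def jacobiMeasure (a : ℝ) : Measure ℝ :=
  (volume.restrict (Set.Ioo (-1) 1)).withDensity fun x => ENNReal.ofReal ((1 - x ^ 2) ^ a)

variable {a : ℝ}

instance : SigmaFinite (jacobiMeasure a) := SigmaFinite.withDensity_ofReal _

instance : NullSingletonClass (jacobiMeasure a) := nullSingletonClass_withDensity _

instance : NeZero (jacobiMeasure a) := by
  have : NeZero (volume.restrict (Set.Ioo (-1 : ℝ) 1)) := ⟨by simp [Measure.restrict_eq_zero]⟩
  exact neZero_withDensity (Measurable.aemeasurable (by fun_prop)) <|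
    ae_restrict_of_forall_mem measurableSet_Ioo fun u hu =>
      (ENNReal.ofReal_pos.2 (Real.rpow_pos_of_pos (by nlinarith [hu.1, hu.2]) a)).ne'

lemma ae_mem_Ioo_jacobiMeasure : ∀ᵐ u ∂jacobiMeasure a, u ∈ Set.Ioo (-1) 1 :=
  (withDensity_absolutelyContinuous _ _).ae_le (ae_restrict_mem measurableSet_Ioo)

instance : (jacobiMeasure a).IsNegInvariant where
  neg_eq_self := by
    have hneg : MeasurePreserving (Neg.neg : ℝ → ℝ) (volume.restrict (Set.Ioo (-1) 1))
        (volume.restrict (Set.Ioo (-1) 1)) := by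
      simpa using (Measure.measurePreserving_neg (volume : Measure ℝ)).restrict_preimage
        (measurableSet_Ioo (a := -1) (b := 1))
    ext A hA
    rw [Measure.neg, Measure.map_apply measurable_neg hA, jacobiMeasure, withDensity_apply _ hA,
      withDensity_apply _ (measurable_neg hA), ← hneg.setLIntegral_comp_preimage hA (by fun_prop)]
    simp only [neg_sq]

lemma integrableOn_one_sub_sq_rpow (ha : -1 < a) :
    IntegrableOn (fun u : ℝ => (1 - u ^ 2) ^ a) (Set.Ioo (-1) 1) := by
  have hright : IntervalIntegrable (fun u : ℝ => (1 - u ^ 2) ^ a) volume 0 1 := by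
    have hsub : IntervalIntegrable (fun u : ℝ => (1 - u) ^ a) volume 0 1 := by
      simpa using ((intervalIntegral.intervalIntegrable_rpow' (a := 0) (b := 1) ha).comp_sub_left
        1).symm
    have hadd : ContinuousOn (fun u : ℝ => (1 + u) ^ a) (Set.uIcc 0 1) := by
      refine ContinuousOn.rpow_const (by fun_prop) fun x hx => .inl ?_
      rw [Set.uIcc_of_le zero_le_one] at hx
      linarith [hx.1]
    refine (hsub.mul_continuousOn hadd).congr_uIoo fun x hx => ?_
    rw [Set.uIoo_of_le zero_le_one] at hx
    simp only
    rw [← Real.mul_rpow (by linarith [hx.2]) (by linarith [hx.1])]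
    ring_nf
  have hleft : IntervalIntegrable (fun u : ℝ => (1 - u ^ 2) ^ a) volume (-1) 0 := by
    simpa using (hright.comp_sub_left 0).symm
  exact (intervalIntegrable_iff_integrableOn_Ioo_of_le (by norm_num)).1 (hleft.trans hright)

lemma isFiniteMeasure_jacobiMeasure (ha : -1 < a) : IsFiniteMeasure (jacobiMeasure a) :=
  isFiniteMeasure_withDensity_ofReal (integrableOn_one_sub_sq_rpow ha).hasFiniteIntegral

lemma integrable_pow_jacobiMeasure (ha : -1 < a) (d : ℕ) :
    Integrable (fun u => u ^ d) (jacobiMeasure a) := by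
  have := isFiniteMeasure_jacobiMeasure ha
  refine .of_bound (by fun_prop) 1 (ae_mem_Ioo_jacobiMeasure.mono fun u hu => ?_)
  rw [norm_pow]
  exact pow_le_one₀ (norm_nonneg u) (abs_lt.2 hu).le

lemma restrict_Ioi_jacobiMeasure {l : ℝ} (hl : 0 ≤ l) :
    (jacobiMeasure a).restrict (Set.Ioi l) =
      (volume.restrict (Set.Ioo l 1)).withDensity fun x => ENNReal.ofReal ((1 - x ^ 2) ^ a) := by
  have hIoo : Set.Ioi l ∩ Set.Ioo (-1) 1 = Set.Ioo l 1 := by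
    ext u
    simp only [Set.mem_inter_iff, Set.mem_Ioi, Set.mem_Ioo]
    exact ⟨fun h => ⟨h.1, h.2.2⟩, fun h => ⟨h.1, by linarith [h.1], h.2⟩⟩
  rw [jacobiMeasure, restrict_withDensity measurableSet_Ioi,
    Measure.restrict_restrict measurableSet_Ioi, hIoo]

/-- The incomplete moment `∫_l^1 u ^ d * (1 - u ^ 2) ^ a du` of the Jacobi weight. -/
noncomputable def jacobiMoment (a : ℝ) (d : ℕ) (l : ℝ) : ℝ :=
  ∫ u in Set.Ioi l, u ^ d ∂jacobiMeasure a

lemma jacobiMoment_nonneg (d : ℕ) {l : ℝ} (hl : 0 ≤ l) : 0 ≤ jacobiMoment a d l :=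
  setIntegral_nonneg measurableSet_Ioi fun _ hu => pow_nonneg (hl.trans hu.le) d

lemma jacobiMoment_eq_intervalIntegral (d : ℕ) {l : ℝ} (h0 : 0 ≤ l) (h1 : l ≤ 1) :
    jacobiMoment a d l = ∫ u in l..1, u ^ d * (1 - u ^ 2) ^ a := by
  rw [jacobiMoment, restrict_Ioi_jacobiMeasure h0,
    integral_withDensity_eq_integral_toReal_smul (by fun_prop) (by simp),
    intervalIntegral.integral_of_le h1, integral_Ioc_eq_integral_Ioo]
  refine setIntegral_congr_fun measurableSet_Ioo fun u hu => ?_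
  have hu1 : 0 ≤ 1 - u ^ 2 := by nlinarith [hu.1, hu.2]
  simp only [ENNReal.toReal_ofReal (Real.rpow_nonneg hu1 a), smul_eq_mul, mul_comm]

lemma hasDerivAt_pow_mul_one_sub_sq_rpow (d : ℕ) {u : ℝ} (hu : 0 < 1 - u ^ 2) :
    HasDerivAt (fun u : ℝ => u ^ d * (1 - u ^ 2) ^ (a + 1))
      (d * (u ^ (d - 1) * (1 - u ^ 2) ^ a) - (d + 2 * a + 2) * (u ^ (d + 1) * (1 - u ^ 2) ^ a))
      u := by
  have hderiv := (hasDerivAt_pow d u).mul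
    (((hasDerivAt_pow 2 u).const_sub 1).rpow_const (p := a + 1) (.inl hu.ne'))
  have hrpow : (1 - u ^ 2) ^ (a + 1) = (1 - u ^ 2) * (1 - u ^ 2) ^ a := by
    rw [Real.rpow_add hu, Real.rpow_one, mul_comm]
  refine hderiv.congr_deriv ?_
  rw [hrpow, add_sub_cancel_right]
  obtain _ | d := d
  · simp only [CharP.cast_eq_zero]
    ring
  · simp only [Nat.add_sub_cancel]
    push_cast
    ring

lemma jacobiMoment_succ (ha : -1 < a) (d : ℕ) {l : ℝ} (h0 : 0 ≤ l) (h1 : l ≤ 1) :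
    jacobiMoment a (d + 1) l = (d + 2 * a + 2)⁻¹ * ((1 - l ^ 2) ^ (a + 1) * l ^ d) +
      d * (d + 2 * a + 2)⁻¹ * jacobiMoment a (d - 1) l := by
  have hint (e : ℕ) : IntervalIntegrable (fun u : ℝ => u ^ e * (1 - u ^ 2) ^ a) volume l 1 := by
    refine .continuousOn_mul ?_ (by fun_prop)
    exact ((intervalIntegrable_iff_integrableOn_Ioo_of_le h1).2
      ((integrableOn_one_sub_sq_rpow ha).mono_set (Set.Ioo_subset_Ioo_left (by linarith))))
  have hcont : ContinuousOn (fun u : ℝ => u ^ d * (1 - u ^ 2) ^ (a + 1)) (Set.Icc l 1) :=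
    .mul (by fun_prop) (.rpow_const (by fun_prop) fun _ _ => .inr (by linarith))
  have hparts := intervalIntegral.integral_eq_sub_of_hasDerivAt_of_le h1 hcont
    (fun u hu => hasDerivAt_pow_mul_one_sub_sq_rpow d (by nlinarith [hu.1, hu.2]))
    (((hint _).const_mul _).sub ((hint _).const_mul _))
  rw [intervalIntegral.integral_sub ((hint _).const_mul _) ((hint _).const_mul _),
    intervalIntegral.integral_const_mul, intervalIntegral.integral_const_mul,
    ← jacobiMoment_eq_intervalIntegral _ h0 h1, ← jacobiMoment_eq_intervalIntegral _ h0 h1,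
    one_pow, one_pow, sub_self, Real.zero_rpow (by linarith)] at hparts
  have hne : (d + 2 * a + 2 : ℝ) ≠ 0 := by
    have : (0 : ℝ) ≤ d := d.cast_nonneg
    linarith
  field_simp
  linarith

end JacobiMeasure

section MomentDeterminants

open Matrix

variable {a : ℝ} {m μ n : ℕ}

lemma det_eq_mul_det_submatrix_of_row_zero {R : Type*} [CommRing R]
    {A : Matrix (Fin (n + 1)) (Fin (n + 1)) R} (h : ∀ j : Fin n, A 0 j.succ = 0) :
    A.det = A 0 0 * (A.submatrix Fin.succ Fin.succ).det := by
  rw [det_succ_row_zero, Fin.sum_univ_succ, Finset.sum_eq_zero fun j _ => by simp [h]]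
  simp [Fin.succAbove_zero]

lemma det_jacobiMoment_odd (ha : -1 < a) {p : Fin m → ℝ} (hp : ∀ i, p i ∈ Set.Ioo 0 1) :
    (of fun i j : Fin m => jacobiMoment a (2 * j + 1) (p i)).det =
      (∏ j : Fin m, ((2 * j : ℕ) + 2 * a + 2)⁻¹) *
        ((∏ i, (1 - p i ^ 2) ^ (a + 1)) * (vandermonde (p ^ 2)).det) := by
  obtain _ | m := m
  · simp
  rw [← det_mul_column, ← det_mul_row]
  refine det_eq_of_forall_col_eq_smul_add_pred
    (fun j => (2 * (j + 1) : ℕ) * ((2 * (j + 1) : ℕ) + 2 * a + 2)⁻¹) (fun i => ?_) fun i j => ?_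
  · simpa using jacobiMoment_succ ha 0 (hp i).1.le (hp i).2.le
  · simpa [← pow_mul] using! jacobiMoment_succ ha (2 * (j + 1)) (hp i).1.le (hp i).2.le

lemma det_jacobiMoment_even (ha : -1 < a) {p : Fin m → ℝ} (hp : ∀ i, p i ∈ Set.Ioo 0 1) :
    (of fun i j : Fin (m + 1) => jacobiMoment a (2 * j) (Fin.cons (α := fun _ => ℝ) 0 p i)).det =
      (jacobiMoment a 0 0 * ∏ j : Fin m, ((2 * j + 1 : ℕ) + 2 * a + 2)⁻¹) *
        ((∏ i, p i * (1 - p i ^ 2) ^ (a + 1)) * (vandermonde (p ^ 2)).det) := by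
  set l : Fin (m + 1) → ℝ := Fin.cons 0 p
  have hl : ∀ i, l i ∈ Set.Ico 0 1 := Fin.cases (by simp [l]) fun i => ⟨(hp i).1.le, (hp i).2⟩
  let B : Matrix (Fin (m + 1)) (Fin (m + 1)) ℝ := of fun i => Fin.cons (jacobiMoment a 0 (l i))
    fun j => ((2 * j + 1 : ℕ) + 2 * a + 2)⁻¹ * ((1 - l i ^ 2) ^ (a + 1) * l i ^ (2 * j + 1 : ℕ))
  have hB : (of fun i j : Fin (m + 1) => jacobiMoment a (2 * j) (l i)).det = B.det := by
    refine det_eq_of_forall_col_eq_smul_add_pred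
      (fun j => (2 * j + 1 : ℕ) * ((2 * j + 1 : ℕ) + 2 * a + 2)⁻¹) (fun i => ?_) fun i j => ?_
    · simp [B]
    · simpa [B] using! jacobiMoment_succ ha (2 * j + 1) (hl i).1 (hl i).2.le
  have hsub : B.submatrix Fin.succ Fin.succ = of fun i j : Fin m =>
      ((2 * j + 1 : ℕ) + 2 * a + 2)⁻¹ *
        (of fun i j => (p i * (1 - p i ^ 2) ^ (a + 1)) * vandermonde (p ^ 2) i j) i j := by
    ext i j
    simp only [B, l, submatrix_apply, of_apply, Fin.cons_succ, vandermonde_apply, Pi.pow_apply]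
    ring
  rw [hB, det_eq_mul_det_submatrix_of_row_zero fun j => by simp [B, l], hsub, det_mul_row,
    det_mul_column]
  simp [B, l, mul_assoc]

lemma lowerEndpoints_one (p : Fin m → ℝ) : lowerEndpoints 1 p = Fin.cons 0 p := by
  ext i
  cases i using Fin.cases with
  | zero => simp [lowerEndpoints]
  | succ i => exact lowerEndpoints_addNat p i

theorem exists_det_jacobiMoment_lowerEndpoints (m : ℕ) (hμ : μ ≤ 1) (ha : -1 < a) :
    ∃ K : ℝ, 0 ≤ K ∧ ∀ p : Fin m → ℝ, (∀ i, p i ∈ Set.Ioo 0 1) →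
      (of fun i j : Fin (m + μ) => jacobiMoment a (2 * j + (1 - μ)) (lowerEndpoints μ p i)).det =
        K * ((∏ i, p i ^ μ * (1 - p i ^ 2) ^ (a + 1)) * (vandermonde (p ^ 2)).det) := by
  have hinv (d : ℕ) : 0 ≤ ((d : ℝ) + 2 * a + 2)⁻¹ :=
    inv_nonneg.2 (by linarith [d.cast_nonneg (α := ℝ)])
  interval_cases μ
  · refine ⟨∏ j : Fin m, ((2 * j : ℕ) + 2 * a + 2)⁻¹,
      Finset.prod_nonneg fun j _ => hinv (2 * j), fun p hp => ?_⟩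
    simpa [lowerEndpoints] using det_jacobiMoment_odd ha hp
  · refine ⟨jacobiMoment a 0 0 * ∏ j : Fin m, ((2 * j + 1 : ℕ) + 2 * a + 2)⁻¹,
      mul_nonneg (jacobiMoment_nonneg 0 le_rfl)
        (Finset.prod_nonneg fun j _ => hinv (2 * j + 1)), fun p hp => ?_⟩
    simpa [lowerEndpoints_one] using det_jacobiMoment_even ha hp

end MomentDeterminants

section BetaEnsemble

open Matrix

variable {n : ℕ}

lemma abs_det_vandermonde_comp_perm (x : Fin n → ℝ) (σ : Equiv.Perm (Fin n)) :
    |(vandermonde (x ∘ σ)).det| = |(vandermonde x).det| :=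
  abs_det_submatrix_equiv_equiv σ (Equiv.refl _) (vandermonde x)

@[fun_prop]
lemma measurable_det_vandermonde : Measurable fun x : Fin n → ℝ => (vandermonde x).det := by
  simp only [det_vandermonde]
  fun_prop

/-- The unnormalized `β`-ensemble of `n` points with weight `ρ`: the measure with density
`∏_{i < j} |x j - x i| ^ β` with respect to the product of `n` copies of `ρ`. -/
noncomputable def betaEnsemble (ρ : Measure ℝ) (n β : ℕ) : Measure (Fin n → ℝ) :=
  (Measure.pi fun _ => ρ).withDensity fun x => ENNReal.ofReal (|(vandermonde x).det| ^ β)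

lemma lintegral_betaEnsemble (ρ : Measure ℝ) [SigmaFinite ρ] (β : ℕ) (f : (Fin n → ℝ) → ℝ≥0∞) :
    ∫⁻ x, f x ∂betaEnsemble ρ n β =
      ∫⁻ x, f x * ENNReal.ofReal (|(vandermonde x).det| ^ β) ∂Measure.pi fun _ => ρ := by
  rw [betaEnsemble, lintegral_withDensity_eq_lintegral_mul_non_measurable _ (by fun_prop)
    (by simp)]
  simp only [Pi.mul_apply, mul_comm]

end BetaEnsemble

section Decimation

open Matrix

variable {m μ n : ℕ}

lemma det_parityVandermonde_nonneg (c : ℕ) {v : Fin n → ℝ} (hv : StrictMono v)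
    (h0 : ∀ i, 0 ≤ v i) : 0 ≤ (parityVandermonde c v).det := by
  rw [det_parityVandermonde]
  refine mul_nonneg (Finset.prod_nonneg fun i _ => pow_nonneg (h0 i) c) ?_
  exact (det_vandermonde_pos fun i j hij => pow_lt_pow_left₀ (hv hij) (h0 i) two_ne_zero).le

lemma nonneg_of_mem_gaps {p : Fin m → ℝ} (h0 : ∀ i, 0 ≤ p i) {q : Fin (m + μ) → ℝ}
    (hq : q ∈ Set.univ.pi (gap (lowerEndpoints μ p))) (i : Fin (m + μ)) : 0 ≤ q i :=
  (lowerEndpoints_nonneg h0 i).trans (hq i trivial).1.le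

lemma strictMono_of_mem_gaps {l q : Fin n → ℝ} (hq : q ∈ Set.univ.pi (gap l)) :
    StrictMono q := fun i j hij => ((hq i trivial).2 j hij).trans (hq j trivial).1

@[fun_prop]
lemma measurable_abs_pi {ι : Type*} : Measurable fun x : ι → ℝ => |x| :=
  measurable_pi_lambda _ fun i => (measurable_pi_apply i).abs

@[fun_prop]
lemma measurable_det_parityVandermonde (c : ℕ) :
    Measurable fun v : Fin n → ℝ => (parityVandermonde c v).det := by
  simp only [det_parityVandermonde, det_vandermonde]
  fun_prop

variable {ν : Measure ℝ} [SigmaFinite ν] [NullSingletonClass ν]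

lemma lintegral_betaEnsemble_one_eq_sorted (hμ : μ ≤ 1) [ν.IsNegInvariant]
    {G : (Fin (2 * m + μ) → ℝ) → ℝ≥0∞} (hG : Measurable G)
    (hperm : ∀ (σ : Equiv.Perm (Fin (2 * m + μ))) t, G (t ∘ σ) = G t) :
    ∫⁻ x, G |x| ∂betaEnsemble ν (2 * m + μ) 1 =
      (2 * m + μ).factorial * ∫⁻ t in {t | StrictMono t}, G t * ENNReal.ofReal (2 ^ (2 * m + μ) *
        ((parityVandermonde μ (t ∘ interleaveEquiv m hμ ∘ .inl)).det *
          (parityVandermonde (1 - μ) (t ∘ interleaveEquiv m hμ ∘ .inr)).det))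
        ∂Measure.pi fun _ => ν.restrict (Set.Ioi 0) := by
  set f : (Fin (2 * m + μ) → ℝ) → ℝ≥0∞ := fun x =>
    G |x| * ENNReal.ofReal (|(vandermonde x).det| ^ 1)
  have hfperm (σ : Equiv.Perm (Fin (2 * m + μ))) (t : Fin (2 * m + μ) → ℝ) :
      ∑ ε : Fin (2 * m + μ) → ℤˣ, f (ε • (t ∘ σ)) = ∑ ε : Fin (2 * m + μ) → ℤˣ, f (ε • t) := by
    refine Fintype.sum_equiv (σ.arrowCongr (.refl _)) _ _ fun ε => ?_
    have hcomp : ε • (t ∘ σ) = (σ.arrowCongr (.refl _) ε • t) ∘ σ := by ext i; simp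
    simp only [f, hcomp, abs_det_vandermonde_comp_perm]
    congr 1
    exact hperm σ |σ.arrowCongr (.refl _) ε • t|
  rw [lintegral_betaEnsemble, lintegral_pi_eq_lintegral_sum_signs ν (by fun_prop),
    lintegral_pi_eq_factorial_mul_setLIntegral _ hfperm]
  congr 1
  have hpos : ∀ᵐ t ∂Measure.pi fun _ : Fin (2 * m + μ) => ν.restrict (Set.Ioi 0), ∀ i, 0 < t i :=
    ae_all_iff.2 fun i => (Measure.quasiMeasurePreserving_eval _ i).ae
      (ae_restrict_mem measurableSet_Ioi)
  refine setLIntegral_congr_fun_ae measurableSet_strictMono (hpos.mono fun t h0 ht => ?_)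
  have habs_smul (ε : Fin (2 * m + μ) → ℤˣ) : |ε • t| = t := by
    ext i
    obtain h | h := Int.units_eq_one_or (ε i) <;> simp [h, abs_of_pos (h0 i), Units.smul_def]
  simp only [habs_smul, pow_one, ← Finset.mul_sum]
  rw [← ENNReal.ofReal_sum_of_nonneg fun _ _ => abs_nonneg _,
    sum_signs_abs_det_vandermonde hμ ht h0]

lemma setLIntegral_strictMono_parityVandermonde (hμ : μ ≤ 1) (hν : ∀ᵐ u ∂ν, 0 < u)
    (hmom : ∀ d : ℕ, Integrable (fun u => u ^ d) ν) {H : (Fin m → ℝ) → ℝ≥0∞} (hH : Measurable H) :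
    ∫⁻ t in {t : Fin (2 * m + μ) → ℝ | StrictMono t}, H (t ∘ interleaveEquiv m hμ ∘ .inl) *
        ENNReal.ofReal ((parityVandermonde μ (t ∘ interleaveEquiv m hμ ∘ .inl)).det *
          (parityVandermonde (1 - μ) (t ∘ interleaveEquiv m hμ ∘ .inr)).det)
        ∂Measure.pi (fun _ => ν) =
      ∫⁻ p in {p | StrictMono p}, H p * ENNReal.ofReal ((parityVandermonde μ p).det *
        (of fun i j : Fin (m + μ) =>
          ∫ u in Set.Ioi (lowerEndpoints μ p i), u ^ (2 * (j : ℕ) + (1 - μ)) ∂ν).det)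
        ∂Measure.pi fun _ => ν := by
  have hpos : ∀ᵐ p ∂Measure.pi fun _ : Fin m => ν, ∀ i, 0 < p i :=
    ae_all_iff.2 fun i => (Measure.quasiMeasurePreserving_eval _ i).ae hν
  rw [setLIntegral_strictMono_interleave hμ hν]
  · refine setLIntegral_congr_fun_ae measurableSet_strictMono (hpos.mono fun p h0 hp => ?_)
    have hdet := det_parityVandermonde_nonneg μ hp fun i => (h0 i).le
    simp only [interleave_comp_inl, interleave_comp_inr, ENNReal.ofReal_mul hdet]
    rw [lintegral_const_mul _ (by fun_prop), lintegral_const_mul _ (by fun_prop)]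
    congr 2
    exact setLIntegral_gaps_ofReal_det (fun j => hmom _) (lowerEndpoints_strictMono hμ hp h0)
      fun q hq => det_parityVandermonde_nonneg _ (strictMono_of_mem_gaps hq)
        (nonneg_of_mem_gaps (fun i => (h0 i).le) hq)
  · have hcomp {k : ℕ} (e : Fin k → Fin (2 * m + μ)) :
        Measurable fun t : Fin (2 * m + μ) → ℝ => t ∘ e := by
      fun_prop
    exact (hH.comp (hcomp _)).mul (((measurable_det_parityVandermonde μ).comp (hcomp _)).mul
      ((measurable_det_parityVandermonde (1 - μ)).comp (hcomp _))).ennreal_ofReal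

end Decimation

section Squaring

variable {a : ℝ} {μ : ℕ}

/-- The Jacobi weight `y ^ (μ - 1 / 2) * (1 - y) ^ (2 * a + 1)` on `(0, 1)` of the unitary ensemble,
as a measure on `ℝ`. -/
noncomputable def unitaryJacobiMeasure (a : ℝ) (μ : ℕ) : Measure ℝ :=
  (volume.restrict (Set.Ioo 0 1)).withDensity fun y =>
    ENNReal.ofReal (y ^ ((μ : ℝ) - 1 / 2) * (1 - y) ^ (2 * a + 1))

instance : SigmaFinite (unitaryJacobiMeasure a μ) := SigmaFinite.withDensity_ofReal _

lemma measurePreserving_withDensity {X Y : Type*} [MeasurableSpace X] [MeasurableSpace Y]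
    {ρ : Measure X} {τ : Measure Y} {f : X → Y} (hf : MeasurePreserving f ρ τ) {w : Y → ℝ≥0∞}
    (hw : Measurable w) :
    MeasurePreserving f (ρ.withDensity (w ∘ f)) (τ.withDensity w) := by
  refine ⟨hf.measurable, ?_⟩
  ext A hA
  rw [Measure.map_apply hf.measurable hA, withDensity_apply _ hA,
    withDensity_apply _ (hf.measurable hA)]
  exact hf.setLIntegral_comp_preimage hA hw

lemma measurePreserving_sq_Ioo :
    MeasurePreserving (fun u : ℝ => u ^ 2)
      ((volume.restrict (Set.Ioo 0 1)).withDensity fun u => ENNReal.ofReal (2 * u))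
      (volume.restrict (Set.Ioo 0 1)) := by
  have hinj : Set.InjOn (fun u : ℝ => u ^ 2) (Set.Ioo 0 1) := fun u hu v hv h =>
    (pow_left_inj₀ hu.1.le hv.1.le two_ne_zero).1 h
  have himage : (fun u : ℝ => u ^ 2) '' Set.Ioo 0 1 = Set.Ioo 0 1 := by
    ext y
    refine ⟨?_, fun hy => ⟨√y, ?_, Real.sq_sqrt hy.1.le⟩⟩
    · rintro ⟨u, hu, rfl⟩
      exact ⟨pow_pos hu.1 2, pow_lt_one₀ hu.1.le hu.2 two_ne_zero⟩
    · exact ⟨Real.sqrt_pos.2 hy.1, by simpa using Real.sqrt_lt_sqrt hy.1.le hy.2⟩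
  have hderiv (u : ℝ) (_ : u ∈ Set.Ioo (0 : ℝ) 1) :
      HasDerivWithinAt (fun u : ℝ => u ^ 2) (2 * u) (Set.Ioo 0 1) u := by
    simpa using (hasDerivAt_pow 2 u).hasDerivWithinAt
  have hmap := map_withDensity_abs_det_fderiv_eq_addHaar (f' := fun u => .toSpanSingleton ℝ (2 * u))
    volume measurableSet_Ioo.nullMeasurableSet (fun u hu => (hderiv u hu).hasFDerivWithinAt) hinj
  rw [himage] at hmap
  refine ⟨by fun_prop, .trans (congrArg _ (withDensity_congr_ae ?_)) hmap⟩
  refine (ae_restrict_mem measurableSet_Ioo).mono fun u hu => ?_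
  simp [abs_of_pos hu.1]

lemma two_mul_unitaryJacobi_weight_sq {u : ℝ} (hu : u ∈ Set.Ioo 0 1) :
    2 * u * ((u ^ 2) ^ ((μ : ℝ) - 1 / 2) * (1 - u ^ 2) ^ (2 * a + 1)) =
      (1 - u ^ 2) ^ a * (2 * (u ^ (2 * μ) * (1 - u ^ 2) ^ (a + 1))) := by
  have hpos : 0 < 1 - u ^ 2 := by nlinarith [hu.1, hu.2]
  have hpow : u * (u ^ 2) ^ ((μ : ℝ) - 1 / 2) = u ^ (2 * μ) := by
    calc u * (u ^ 2) ^ ((μ : ℝ) - 1 / 2) = u ^ (1 : ℝ) * u ^ (2 * ((μ : ℝ) - 1 / 2)) := by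
          rw [Real.rpow_one, ← Real.rpow_natCast u 2, ← Real.rpow_mul hu.1.le, Nat.cast_ofNat]
      _ = u ^ (2 * μ) := by
          rw [← Real.rpow_add hu.1, ← Real.rpow_natCast]
          push_cast
          ring_nf
  rw [show 2 * a + 1 = a + (a + 1) by ring, Real.rpow_add hpos, ← hpow]
  ring

lemma measurePreserving_sq_jacobi :
    MeasurePreserving (fun u : ℝ => u ^ 2)
      (((jacobiMeasure a).restrict (Set.Ioi 0)).withDensity fun u =>
        ENNReal.ofReal (2 * (u ^ (2 * μ) * (1 - u ^ 2) ^ (a + 1))))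
      (unitaryJacobiMeasure a μ) := by
  let w : ℝ → ℝ≥0∞ := fun y => ENNReal.ofReal (y ^ ((μ : ℝ) - 1 / 2) * (1 - y) ^ (2 * a + 1))
  have hν : ((jacobiMeasure a).restrict (Set.Ioi 0)).withDensity (fun u =>
        ENNReal.ofReal (2 * (u ^ (2 * μ) * (1 - u ^ 2) ^ (a + 1)))) =
      ((volume.restrict (Set.Ioo 0 1)).withDensity fun u => ENNReal.ofReal (2 * u)).withDensity
        (w ∘ fun u => u ^ 2) := by
    rw [restrict_Ioi_jacobiMeasure le_rfl, ← withDensity_mul _ (by fun_prop) (by fun_prop),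
      ← withDensity_mul _ (by fun_prop) (by fun_prop)]
    refine withDensity_congr_ae ((ae_restrict_mem measurableSet_Ioo).mono fun u hu => ?_)
    simp only [w, Pi.mul_apply, Function.comp_apply]
    rw [← ENNReal.ofReal_mul, ← ENNReal.ofReal_mul, two_mul_unitaryJacobi_weight_sq hu]
    · linarith [hu.1]
    · exact Real.rpow_nonneg (by nlinarith [hu.1, hu.2]) a
  rw [hν]
  exact measurePreserving_withDensity measurePreserving_sq_Ioo (by fun_prop)

end Squaring

section JacobiDecimation

open Matrix

variable {a : ℝ} {m μ : ℕ}

/-- The weight `∏ (p i) ^ (2 * μ) * (1 - (p i) ^ 2) ^ (a + 1)` times the squared Vandermonde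
determinant of `p ^ 2`: up to a constant, the density of the unitary ensemble in the variables
`p` with `y = p ^ 2`. -/
noncomputable def squaredUnitaryDensity (a : ℝ) (μ : ℕ) (p : Fin m → ℝ) : ℝ :=
  (∏ i, p i ^ (2 * μ) * (1 - p i ^ 2) ^ (a + 1)) * (vandermonde (p ^ 2)).det ^ 2

lemma ae_mem_Ioo_jacobiMeasure_restrict_Ioi :
    ∀ᵐ u ∂(jacobiMeasure a).restrict (Set.Ioi 0), u ∈ Set.Ioo (0 : ℝ) 1 := by
  filter_upwards [ae_restrict_mem measurableSet_Ioi, ae_restrict_of_ae ae_mem_Ioo_jacobiMeasure]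
    with u h0 h1
  exact ⟨h0, h1.2⟩

lemma ae_pi_mem_Ioo_jacobiMeasure_restrict_Ioi :
    ∀ᵐ p ∂Measure.pi fun _ : Fin m => (jacobiMeasure a).restrict (Set.Ioi 0),
      ∀ i, p i ∈ Set.Ioo (0 : ℝ) 1 :=
  ae_all_iff.2 fun i =>
    (Measure.quasiMeasurePreserving_eval _ i).ae ae_mem_Ioo_jacobiMeasure_restrict_Ioi

lemma setIntegral_jacobiMeasure_restrict_Ioi (d : ℕ) {l : ℝ} (hl : 0 ≤ l) :
    ∫ u in Set.Ioi l, u ^ d ∂(jacobiMeasure a).restrict (Set.Ioi 0) = jacobiMoment a d l := by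
  rw [Measure.restrict_restrict measurableSet_Ioi, Set.Ioi_inter_Ioi, sup_of_le_left hl,
    jacobiMoment]

lemma exists_det_parityVandermonde_mul_det_moments (m : ℕ) (hμ : μ ≤ 1) (ha : -1 < a) :
    ∃ K : ℝ, 0 ≤ K ∧ ∀ p : Fin m → ℝ, (∀ i, p i ∈ Set.Ioo 0 1) →
      (parityVandermonde μ p).det * (of fun i j : Fin (m + μ) =>
        ∫ u in Set.Ioi (lowerEndpoints μ p i), u ^ (2 * (j : ℕ) + (1 - μ))
          ∂(jacobiMeasure a).restrict (Set.Ioi 0)).det = K * squaredUnitaryDensity a μ p := by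
  obtain ⟨K, hK, hdet⟩ := exists_det_jacobiMoment_lowerEndpoints m hμ ha
  refine ⟨K, hK, fun p hp => ?_⟩
  have hl := lowerEndpoints_nonneg (μ := μ) fun i => (hp i).1.le
  simp only [setIntegral_jacobiMeasure_restrict_Ioi _ (hl _), hdet p hp, det_parityVandermonde,
    squaredUnitaryDensity, Finset.prod_mul_distrib, pow_mul', sq]
  ring

lemma exists_lintegral_jacobiOrthogonal (m : ℕ) (hμ : μ ≤ 1) (ha : -1 < a) :
    ∃ C : ℝ≥0∞, ∀ (G : (Fin (2 * m + μ) → ℝ) → ℝ≥0∞) (H : (Fin m → ℝ) → ℝ≥0∞),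
      Measurable G → Measurable H → (∀ (σ : Equiv.Perm (Fin (2 * m + μ))) t, G (t ∘ σ) = G t) →
      (∀ t, StrictMono t → (∀ i, 0 < t i) → G t = H (t ∘ interleaveEquiv m hμ ∘ .inl)) →
      ∫⁻ x, G |x| ∂betaEnsemble (jacobiMeasure a) (2 * m + μ) 1 =
        C * ∫⁻ p in {p | StrictMono p}, H p * ENNReal.ofReal (squaredUnitaryDensity a μ p)
          ∂Measure.pi fun _ => (jacobiMeasure a).restrict (Set.Ioi 0) := by
  obtain ⟨K, hK, hdet⟩ := exists_det_parityVandermonde_mul_det_moments m hμ ha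
  refine ⟨(2 * m + μ).factorial * ENNReal.ofReal (2 ^ (2 * m + μ)) * ENNReal.ofReal K,
    fun G H hG hH hperm hGH => ?_⟩
  have hpow : (0 : ℝ) ≤ 2 ^ (2 * m + μ) := by positivity
  rw [lintegral_betaEnsemble_one_eq_sorted hμ hG hperm, mul_assoc, mul_assoc]
  congr 1
  calc _ = ∫⁻ t in {t | StrictMono t}, ENNReal.ofReal (2 ^ (2 * m + μ)) *
          (H (t ∘ interleaveEquiv m hμ ∘ .inl) * ENNReal.ofReal
            ((parityVandermonde μ (t ∘ interleaveEquiv m hμ ∘ .inl)).det *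
              (parityVandermonde (1 - μ) (t ∘ interleaveEquiv m hμ ∘ .inr)).det))
          ∂Measure.pi fun _ => (jacobiMeasure a).restrict (Set.Ioi 0) :=
        setLIntegral_congr_fun_ae measurableSet_strictMono
          (ae_pi_mem_Ioo_jacobiMeasure_restrict_Ioi.mono fun t h01 ht => by
            simp only [hGH t ht fun i => (h01 i).1, ENNReal.ofReal_mul hpow, mul_left_comm])
    _ = ENNReal.ofReal (2 ^ (2 * m + μ)) * ∫⁻ p in {p | StrictMono p},
          ENNReal.ofReal K * (H p * ENNReal.ofReal (squaredUnitaryDensity a μ p))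
          ∂Measure.pi fun _ => (jacobiMeasure a).restrict (Set.Ioi 0) := by
        rw [lintegral_const_mul' _ _ ENNReal.ofReal_ne_top,
          setLIntegral_strictMono_parityVandermonde hμ
            (ae_mem_Ioo_jacobiMeasure_restrict_Ioi.mono fun u hu => hu.1)
            (fun d => (integrable_pow_jacobiMeasure ha d).restrict) hH]
        congr 1
        refine setLIntegral_congr_fun_ae measurableSet_strictMono
          (ae_pi_mem_Ioo_jacobiMeasure_restrict_Ioi.mono fun p hp _ => ?_)
        simp only [hdet p hp, ENNReal.ofReal_mul hK, mul_left_comm]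
    _ = _ := by rw [lintegral_const_mul' _ _ ENNReal.ofReal_ne_top]

lemma measurePreserving_sq_pi_jacobi :
    MeasurePreserving (fun p : Fin m → ℝ => p ^ 2)
      ((Measure.pi fun _ => (jacobiMeasure a).restrict (Set.Ioi 0)).withDensity fun p =>
        ∏ i, ENNReal.ofReal (2 * (p i ^ (2 * μ) * (1 - p i ^ 2) ^ (a + 1))))
      (Measure.pi fun _ => unitaryJacobiMeasure a μ) := by
  have hpi := measurePreserving_pi (fun _ : Fin m => _) _
    fun _ => measurePreserving_sq_jacobi (a := a) (μ := μ)
  rwa [pi_withDensity _ (by fun_prop)] at hpi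

lemma prod_ofReal_mul_ofReal_sq_det_vandermonde {p : Fin m → ℝ} (hp : ∀ i, p i ∈ Set.Ioo 0 1) :
    (∏ i, ENNReal.ofReal (2 * (p i ^ (2 * μ) * (1 - p i ^ 2) ^ (a + 1)))) *
        ENNReal.ofReal (|(vandermonde (p ^ 2)).det| ^ 2) =
      2 ^ m * ENNReal.ofReal (squaredUnitaryDensity a μ p) := by
  have hw (i : Fin m) : 0 ≤ p i ^ (2 * μ) * (1 - p i ^ 2) ^ (a + 1) :=
    mul_nonneg (pow_nonneg (hp i).1.le _)
      (Real.rpow_nonneg (by nlinarith [(hp i).1, (hp i).2]) _)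
  rw [squaredUnitaryDensity, ENNReal.ofReal_mul (Finset.prod_nonneg fun i _ => hw i),
    ENNReal.ofReal_prod_of_nonneg fun i _ => hw i, sq_abs, ← mul_assoc]
  simp only [ENNReal.ofReal_mul zero_le_two, Finset.prod_mul_distrib, ENNReal.ofReal_ofNat,
    Finset.prod_const, Finset.card_univ, Fintype.card_fin]

lemma lintegral_unitaryJacobi_eq_sorted {H : (Fin m → ℝ) → ℝ≥0∞} (hH : Measurable H)
    (hperm : ∀ (σ : Equiv.Perm (Fin m)) y, H (y ∘ σ) = H y) :
    ∫⁻ y, H y ∂betaEnsemble (unitaryJacobiMeasure a μ) m 2 =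
      m.factorial * 2 ^ m * ∫⁻ p in {p | StrictMono p},
        H (p ^ 2) * ENNReal.ofReal (squaredUnitaryDensity a μ p)
        ∂Measure.pi fun _ => (jacobiMeasure a).restrict (Set.Ioi 0) := by
  let w : (Fin m → ℝ) → ℝ≥0∞ := fun p =>
    ∏ i, ENNReal.ofReal (2 * (p i ^ (2 * μ) * (1 - p i ^ 2) ^ (a + 1)))
  let F : (Fin m → ℝ) → ℝ≥0∞ := fun p => H (p ^ 2) *
    (w p * ENNReal.ofReal (|(vandermonde (p ^ 2)).det| ^ 2))
  have hFperm (σ : Equiv.Perm (Fin m)) (p : Fin m → ℝ) : F (p ∘ σ) = F p := by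
    have hsq : (p ∘ σ) ^ 2 = (p ^ 2) ∘ σ := rfl
    simp only [F, w, hsq, hperm, abs_det_vandermonde_comp_perm, Function.comp_apply]
    rw [Equiv.prod_comp σ fun i => ENNReal.ofReal (2 * (p i ^ (2 * μ) * (1 - p i ^ 2) ^ (a + 1)))]
  have hdens : Measurable fun y => H y * ENNReal.ofReal (|(vandermonde y).det| ^ 2) := by fun_prop
  have hdens_sq : Measurable fun p => H (p ^ 2) *
      ENNReal.ofReal (|(vandermonde (p ^ 2)).det| ^ 2) := hdens.comp (by fun_prop)
  calc ∫⁻ y, H y ∂betaEnsemble (unitaryJacobiMeasure a μ) m 2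
      = ∫⁻ p, F p ∂Measure.pi fun _ => (jacobiMeasure a).restrict (Set.Ioi 0) := by
        rw [lintegral_betaEnsemble, ← measurePreserving_sq_pi_jacobi.lintegral_comp hdens,
          lintegral_withDensity_eq_lintegral_mul _ (by fun_prop) hdens_sq]
        simp only [F, w, Pi.mul_apply, mul_left_comm]
    _ = m.factorial * ∫⁻ p in {p | StrictMono p}, F p
          ∂Measure.pi fun _ => (jacobiMeasure a).restrict (Set.Ioi 0) :=
        lintegral_pi_eq_factorial_mul_setLIntegral _ hFperm
    _ = m.factorial * ∫⁻ p in {p | StrictMono p},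
          2 ^ m * (H (p ^ 2) * ENNReal.ofReal (squaredUnitaryDensity a μ p))
          ∂Measure.pi fun _ => (jacobiMeasure a).restrict (Set.Ioi 0) := by
        congr 1
        refine setLIntegral_congr_fun_ae measurableSet_strictMono
          (ae_pi_mem_Ioo_jacobiMeasure_restrict_Ioi.mono fun p hp _ => ?_)
        simp only [F, w]
        rw [prod_ofReal_mul_ofReal_sq_det_vandermonde hp, mul_left_comm]
    _ = _ := by rw [lintegral_const_mul' _ _ (by simp), mul_assoc]

theorem exists_lintegral_jacobiOrthogonal_eq_unitary (m : ℕ) (hμ : μ ≤ 1) (ha : -1 < a) :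
    ∃ C : ℝ≥0∞, ∀ (G : (Fin (2 * m + μ) → ℝ) → ℝ≥0∞) (H : (Fin m → ℝ) → ℝ≥0∞),
      Measurable G → Measurable H → (∀ (σ : Equiv.Perm (Fin (2 * m + μ))) t, G (t ∘ σ) = G t) →
      (∀ (σ : Equiv.Perm (Fin m)) y, H (y ∘ σ) = H y) →
      (∀ t, StrictMono t → (∀ i, 0 < t i) → G t = H ((t ∘ interleaveEquiv m hμ ∘ .inl) ^ 2)) →
      ∫⁻ x, G |x| ∂betaEnsemble (jacobiMeasure a) (2 * m + μ) 1 =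
        C * ∫⁻ y, H y ∂betaEnsemble (unitaryJacobiMeasure a μ) m 2 := by
  obtain ⟨C, hC⟩ := exists_lintegral_jacobiOrthogonal m hμ ha
  refine ⟨C * (m.factorial * 2 ^ m : ℝ≥0∞)⁻¹, fun G H hG hH hGperm hHperm hGH => ?_⟩
  have hconst : (m.factorial * 2 ^ m : ℝ≥0∞) ≠ 0 := by positivity
  rw [lintegral_unitaryJacobi_eq_sorted hH hHperm, hC G (fun p => H (p ^ 2)) hG
    (hH.comp (by fun_prop)) hGperm hGH, mul_assoc, ← mul_assoc (_ : ℝ≥0∞)⁻¹,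
    ENNReal.inv_mul_cancel hconst (by finiteness), one_mul]

end JacobiDecimation

section Counting

variable {n m μ : ℕ}

/-- The number of coordinates of `t` that are less than `s`. -/
noncomputable def countBelow (s : ℝ) (t : Fin n → ℝ) : ℕ :=
  (Finset.univ.filter fun i => t i < s).card

@[fun_prop]
lemma measurable_countBelow (s : ℝ) : Measurable (countBelow s : (Fin n → ℝ) → ℕ) := by
  unfold countBelow
  simp only [Finset.card_filter]
  exact Finset.measurable_sum _ fun i _ => .ite (measurableSet_lt (measurable_pi_apply i)
    measurable_const) measurable_const measurable_const

lemma countBelow_comp_perm (s : ℝ) (t : Fin n → ℝ) (σ : Equiv.Perm (Fin n)) :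
    countBelow s (t ∘ σ) = countBelow s t :=
  Finset.card_equiv σ (by simp)

lemma countBelow_sq {s : ℝ} (hs : 0 ≤ s) {t : Fin n → ℝ} (ht : ∀ i, 0 ≤ t i) :
    countBelow (s ^ 2) (t ^ 2) = countBelow s t := by
  simp only [countBelow, Pi.pow_apply, pow_lt_pow_iff_left₀ (ht _) hs two_ne_zero]

lemma lt_iff_lt_countBelow {t : Fin n → ℝ} (ht : StrictMono t) (s : ℝ) (i : Fin n) :
    t i < s ↔ (i : ℕ) < countBelow s t := by
  constructor
  · intro h
    have hsub : Finset.Iic i ⊆ Finset.univ.filter fun j => t j < s := fun j hj => by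
      simpa using (ht.monotone (Finset.mem_Iic.1 hj)).trans_lt h
    have := Finset.card_le_card hsub
    rwa [Fin.card_Iic] at this
  · contrapose!
    intro h
    have hsub : (Finset.univ.filter fun j => t j < s) ⊆ Finset.Iio i := fun j hj => by
      simp only [Finset.mem_filter, Finset.mem_univ, true_and] at hj
      exact Finset.mem_Iio.2 (ht.lt_iff_lt.1 (hj.trans_le h))
    simpa using! Finset.card_le_card hsub

lemma countBelow_comp_interleaveEquiv_inl (hμ : μ ≤ 1) {t : Fin (2 * m + μ) → ℝ}
    (ht : StrictMono t) (s : ℝ) :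
    countBelow s (t ∘ interleaveEquiv m hμ ∘ .inl) = (countBelow s t + 1 - μ) / 2 := by
  have hle : countBelow s t ≤ 2 * m + μ := by
    simpa using! Finset.card_le_univ (Finset.univ.filter fun i => t i < s)
  have hfilter : (Finset.univ.filter fun i => (t ∘ interleaveEquiv m hμ ∘ .inl) i < s) =
      Finset.univ.filter fun i : Fin m => (i : ℕ) < (countBelow s t + 1 - μ) / 2 := by
    refine Finset.filter_congr fun i _ => ?_
    rw [Function.comp_apply, Function.comp_apply, lt_iff_lt_countBelow ht,
      coe_interleaveEquiv_inl]
    omega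
  rw [countBelow, hfilter, Fin.card_filter_val_lt]
  omega

theorem exists_map_countBelow_jacobiOrthogonal {a : ℝ} (m : ℕ) (hμ : μ ≤ 1) (ha : -1 < a) {s : ℝ}
    (hs : 0 ≤ s) :
    ∃ C : ℝ≥0∞, (betaEnsemble (jacobiMeasure a) (2 * m + μ) 1).map
        (fun x => (countBelow s |x| + 1 - μ) / 2) =
      C • (betaEnsemble (unitaryJacobiMeasure a μ) m 2).map (countBelow (s ^ 2)) := by
  obtain ⟨C, hC⟩ := exists_lintegral_jacobiOrthogonal_eq_unitary m hμ ha
  refine ⟨C, Measure.ext_of_lintegral _ fun f hf => ?_⟩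
  have hcount : Measurable fun t : Fin (2 * m + μ) → ℝ => (countBelow s t + 1 - μ) / 2 :=
    (Measurable.of_discrete (f := fun N => (N + 1 - μ) / 2)).comp (measurable_countBelow s)
  have hmap : ∫⁻ N, f N ∂(betaEnsemble (jacobiMeasure a) (2 * m + μ) 1).map
        (fun x => (countBelow s |x| + 1 - μ) / 2) =
      ∫⁻ x, f ((countBelow s |x| + 1 - μ) / 2) ∂betaEnsemble (jacobiMeasure a) (2 * m + μ) 1 :=
    lintegral_map hf (hcount.comp measurable_abs_pi)
  rw [hmap, lintegral_smul_measure, lintegral_map hf (measurable_countBelow _)]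
  refine hC (fun t => f ((countBelow s t + 1 - μ) / 2)) (fun y => f (countBelow (s ^ 2) y))
    (hf.comp hcount) (hf.comp (measurable_countBelow _)) (fun σ t => ?_) (fun σ y => ?_)
    fun t ht h0 => ?_
  · simp only [countBelow_comp_perm]
  · simp only [countBelow_comp_perm]
  · rw [countBelow_sq hs (t := t ∘ interleaveEquiv m hμ ∘ .inl) fun i => (h0 _).le,
      countBelow_comp_interleaveEquiv_inl hμ ht]

end Counting

section BetaEnsembleMass

open Matrix

variable {ρ : Measure ℝ} {n : ℕ}

lemma isFiniteMeasure_betaEnsemble [IsFiniteMeasure ρ] {R : ℝ} (hR : ∀ᵐ u ∂ρ, u ∈ Set.Icc (-R) R)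
    (n β : ℕ) : IsFiniteMeasure (betaEnsemble ρ n β) := by
  have hcont : Continuous fun x : Fin n → ℝ => |(vandermonde x).det| ^ β := by
    simp only [det_vandermonde]
    fun_prop
  obtain ⟨C, hC⟩ := (isCompact_univ_pi fun _ : Fin n => isCompact_Icc (a := -R) (b := R))
    |>.exists_bound_of_continuousOn hcont.continuousOn
  have hbox : ∀ᵐ x ∂Measure.pi fun _ : Fin n => ρ, ∀ i, x i ∈ Set.Icc (-R) R :=
    ae_all_iff.2 fun i => (Measure.quasiMeasurePreserving_eval _ i).ae hR
  exact isFiniteMeasure_withDensity_ofReal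
    (.of_bounded (hbox.mono fun x hx => hC x fun i _ => hx i))

lemma neZero_betaEnsemble [SigmaFinite ρ] [NullSingletonClass ρ] [NeZero ρ] (n β : ℕ) :
    NeZero (betaEnsemble ρ n β) := by
  have : NeZero (Measure.pi fun _ : Fin n => ρ) := ⟨by
    rw [← Measure.measure_univ_ne_zero, Measure.pi_univ]
    exact Finset.prod_ne_zero_iff.2 fun _ _ => NeZero.ne _⟩
  refine neZero_withDensity (Measurable.aemeasurable (by fun_prop)) ?_
  refine (ae_injective_pi fun _ : Fin n => ρ).mono fun x hx => ?_
  exact (ENNReal.ofReal_pos.2 (pow_pos (abs_pos.2 (det_vandermonde_ne_zero_iff.2 hx)) β)).ne'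

end BetaEnsembleMass

section WithDensityOfReal

variable {X : Type*} [MeasurableSpace X] {ρ : Measure X} {f : X → ℝ}

lemma integrable_of_isFiniteMeasure_withDensity (hf : AEStronglyMeasurable f ρ) (h0 : 0 ≤ᵐ[ρ] f)
    [IsFiniteMeasure (ρ.withDensity fun x => ENNReal.ofReal (f x))] : Integrable f ρ := by
  refine ⟨hf, (hasFiniteIntegral_iff_ofReal h0).2 ?_⟩
  rw [← setLIntegral_univ, ← withDensity_apply _ .univ]
  exact measure_lt_top _ _

lemma integral_indicator_eq_withDensity_real (hf : AEStronglyMeasurable f ρ) (h0 : 0 ≤ᵐ[ρ] f)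
    {A : Set X} (hA : MeasurableSet A) :
    ∫ x, A.indicator f x ∂ρ = (ρ.withDensity fun x => ENNReal.ofReal (f x)).real A := by
  rw [integral_indicator hA, integral_eq_lintegral_of_nonneg_ae (ae_restrict_of_ae h0) hf.restrict,
    Measure.real, withDensity_apply _ hA]

end WithDensityOfReal

section BoxDensity

open Matrix

variable {T : Set ℝ} {w : ℝ → ℝ}

lemma betaEnsemble_withDensity_restrict (hT : MeasurableSet T)
    (hw : Measurable w) (h0 : ∀ u ∈ T, 0 ≤ w u) (n β : ℕ) :
    betaEnsemble ((volume.restrict T).withDensity fun u => ENNReal.ofReal (w u)) n β =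
      (volume.restrict {x | ∀ i, x i ∈ T}).withDensity fun x =>
        ENNReal.ofReal ((∏ i, w (x i)) * |(vandermonde x).det| ^ β) := by
  have hbox : {x : Fin n → ℝ | ∀ i, x i ∈ T} = Set.univ.pi fun _ => T := by ext; simp
  have := fun _ : Fin n => SigmaFinite.withDensity_ofReal (μ := volume.restrict T) w
  rw [betaEnsemble, pi_withDensity _ (by fun_prop), ← Measure.restrict_pi_pi, ← volume_pi,
    ← withDensity_mul _ (by fun_prop) (by fun_prop), hbox]
  refine withDensity_congr_ae ((ae_restrict_mem (.univ_pi fun _ => hT)).mono fun x hx => ?_)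
  have hwx (i : Fin n) (_ : i ∈ Finset.univ) : 0 ≤ w (x i) := h0 _ (hx i trivial)
  simp only [Pi.mul_apply, ← ENNReal.ofReal_prod_of_nonneg hwx,
    ENNReal.ofReal_mul (Finset.prod_nonneg hwx)]

lemma prod_mul_abs_det_vandermonde_pow_nonneg (h0 : ∀ u ∈ T, 0 ≤ w u) {n : ℕ} (β : ℕ)
    {x : Fin n → ℝ} (hx : ∀ i, x i ∈ T) : 0 ≤ (∏ i, w (x i)) * |(vandermonde x).det| ^ β :=
  mul_nonneg (Finset.prod_nonneg fun i _ => h0 _ (hx i)) (by positivity)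

lemma measurableSet_forall_mem (hT : MeasurableSet T) (n : ℕ) :
    MeasurableSet {x : Fin n → ℝ | ∀ i, x i ∈ T} := by
  simp only [Set.ofPred_forall]
  exact .iInter fun i => measurable_pi_apply i hT

lemma integrableOn_prod_mul_abs_det_vandermonde_pow (hT : MeasurableSet T) (hw : Measurable w)
    (h0 : ∀ u ∈ T, 0 ≤ w u) (n β : ℕ) (hfin : IsFiniteMeasure (betaEnsemble
      ((volume.restrict T).withDensity fun u => ENNReal.ofReal (w u)) n β)) :
    IntegrableOn (fun x : Fin n → ℝ => (∏ i, w (x i)) * |(vandermonde x).det| ^ β)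
      {x | ∀ i, x i ∈ T} := by
  rw [betaEnsemble_withDensity_restrict hT hw h0] at hfin
  refine integrable_of_isFiniteMeasure_withDensity
    (Measurable.aestronglyMeasurable (by fun_prop)) ?_
  exact ae_restrict_of_forall_mem (measurableSet_forall_mem hT n) fun x hx =>
    prod_mul_abs_det_vandermonde_pow_nonneg h0 β hx

lemma setIntegral_indicator_eq_betaEnsemble_real (hT : MeasurableSet T) (hw : Measurable w)
    (h0 : ∀ u ∈ T, 0 ≤ w u) (n β : ℕ) {A : Set (Fin n → ℝ)} (hA : MeasurableSet A) :
    ∫ x in {x | ∀ i, x i ∈ T},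
        A.indicator (fun x => (∏ i, w (x i)) * |(vandermonde x).det| ^ β) x =
      (betaEnsemble ((volume.restrict T).withDensity fun u => ENNReal.ofReal (w u)) n β).real
        A := by
  rw [betaEnsemble_withDensity_restrict hT hw h0]
  refine integral_indicator_eq_withDensity_real
    (Measurable.aestronglyMeasurable (by fun_prop)) ?_ hA
  exact ae_restrict_of_forall_mem (measurableSet_forall_mem hT n) fun x hx =>
    prod_mul_abs_det_vandermonde_pow_nonneg h0 β hx

end BoxDensity

section Integrands

open Matrix

variable {a : ℝ} {n m μ : ℕ}

lemma abs_det_vandermonde (x : Fin n → ℝ) :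
    |(vandermonde x).det| = ∏ k, ∏ l ∈ Finset.Iio k, |x k - x l| := by
  simp only [det_vandermonde, Finset.abs_prod]
  exact Finset.prod_comm' (by simp)

lemma joeTotalIntegrand_eq : joeTotalIntegrand n a =
    fun x => (∏ i, (1 - x i ^ 2) ^ a) * |(vandermonde x).det| ^ 1 := by
  ext x
  rw [joeTotalIntegrand, pow_one, abs_det_vandermonde]

lemma jueTotalIntegrand_eq : jueTotalIntegrand m μ a =
    fun y => (∏ i, y i ^ ((μ : ℝ) - 1 / 2) * (1 - y i) ^ (2 * a + 1)) *
      |(vandermonde y).det| ^ 2 := by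
  ext y
  simp only [jueTotalIntegrand, abs_det_vandermonde, ← Finset.prod_pow, sq_abs]

lemma joeGapIntegrand_eq_indicator (s : ℝ) (j : ℤ) : joeGapIntegrand n a s j =
    {x | (countBelow s |x| : ℤ) = j}.indicator (joeTotalIntegrand n a) := by
  ext x
  simp only [joeGapIntegrand, joeTotalIntegrand, Set.indicator_apply, countBelow, Pi.abs_apply,
    Set.mem_ofPred_eq]
  congr

lemma jueGapIntegrand_eq_indicator (c : ℝ) (k : ℕ) :
    jueGapIntegrand m μ a c k = {y | countBelow c y = k}.indicator (jueTotalIntegrand m μ a) := by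
  ext y
  simp only [jueGapIntegrand, jueTotalIntegrand, Set.indicator_apply, countBelow,
    Set.mem_ofPred_eq]

lemma one_sub_sq_rpow_nonneg {u : ℝ} (hu : u ∈ Set.Ioo (-1) 1) : 0 ≤ (1 - u ^ 2) ^ a :=
  Real.rpow_nonneg (by nlinarith [hu.1, hu.2]) a

lemma rpow_mul_one_sub_rpow_nonneg (b c : ℝ) {u : ℝ} (hu : u ∈ Set.Ioo 0 1) :
    0 ≤ u ^ b * (1 - u) ^ c :=
  mul_nonneg (Real.rpow_nonneg hu.1.le b) (Real.rpow_nonneg (sub_nonneg.2 hu.2.le) c)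

lemma measurableSet_countBelow_abs_eq (s : ℝ) (j : ℤ) :
    MeasurableSet {x : Fin n → ℝ | (countBelow s |x| : ℤ) = j} :=
  ((measurable_countBelow s).comp measurable_abs_pi)
    (MeasurableSet.of_discrete (s := {N : ℕ | (N : ℤ) = j}))

lemma measurableSet_countBelow_eq (c : ℝ) (k : ℕ) :
    MeasurableSet {y : Fin n → ℝ | countBelow c y = k} :=
  measurable_countBelow c (measurableSet_singleton k)

lemma integrableOn_joeTotalIntegrand (hfin : IsFiniteMeasure (betaEnsemble (jacobiMeasure a) n 1)) :
    IntegrableOn (joeTotalIntegrand n a) {x | ∀ i, -1 < x i ∧ x i < 1} := by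
  rw [joeTotalIntegrand_eq]
  exact integrableOn_prod_mul_abs_det_vandermonde_pow (T := Set.Ioo (-1) 1)
    (w := fun u => (1 - u ^ 2) ^ a) measurableSet_Ioo (by fun_prop)
    (fun _ => one_sub_sq_rpow_nonneg) n 1 hfin

lemma integrableOn_joeGapIntegrand (hfin : IsFiniteMeasure (betaEnsemble (jacobiMeasure a) n 1))
    (s : ℝ) (j : ℤ) :
    IntegrableOn (joeGapIntegrand n a s j) {x | ∀ i, -1 < x i ∧ x i < 1} := by
  rw [joeGapIntegrand_eq_indicator]
  exact (integrableOn_joeTotalIntegrand hfin).indicator (measurableSet_countBelow_abs_eq s j)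

lemma integrableOn_jueTotalIntegrand
    (hfin : IsFiniteMeasure (betaEnsemble (unitaryJacobiMeasure a μ) m 2)) :
    IntegrableOn (jueTotalIntegrand m μ a) {y | ∀ i, 0 < y i ∧ y i < 1} := by
  rw [jueTotalIntegrand_eq]
  exact integrableOn_prod_mul_abs_det_vandermonde_pow (T := Set.Ioo 0 1)
    (w := fun u => u ^ ((μ : ℝ) - 1 / 2) * (1 - u) ^ (2 * a + 1)) measurableSet_Ioo (by fun_prop)
    (fun _ => rpow_mul_one_sub_rpow_nonneg _ _) m 2 hfin

lemma integrableOn_jueGapIntegrand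
    (hfin : IsFiniteMeasure (betaEnsemble (unitaryJacobiMeasure a μ) m 2)) (c : ℝ) (k : ℕ) :
    IntegrableOn (jueGapIntegrand m μ a c k) {y | ∀ i, 0 < y i ∧ y i < 1} := by
  rw [jueGapIntegrand_eq_indicator]
  exact (integrableOn_jueTotalIntegrand hfin).indicator (measurableSet_countBelow_eq c k)

lemma integral_joeGapIntegrand (s : ℝ) (j : ℤ) :
    ∫ x in {x : Fin n → ℝ | ∀ i, -1 < x i ∧ x i < 1}, joeGapIntegrand n a s j x =
      (betaEnsemble (jacobiMeasure a) n 1).real {x | (countBelow s |x| : ℤ) = j} := by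
  rw [joeGapIntegrand_eq_indicator, joeTotalIntegrand_eq]
  exact setIntegral_indicator_eq_betaEnsemble_real (T := Set.Ioo (-1) 1)
    (w := fun u => (1 - u ^ 2) ^ a) measurableSet_Ioo (by fun_prop)
    (fun _ => one_sub_sq_rpow_nonneg) n 1 (measurableSet_countBelow_abs_eq s j)

lemma integral_joeTotalIntegrand :
    ∫ x in {x : Fin n → ℝ | ∀ i, -1 < x i ∧ x i < 1}, joeTotalIntegrand n a x =
      (betaEnsemble (jacobiMeasure a) n 1).real Set.univ := by
  rw [joeTotalIntegrand_eq, ← Set.indicator_univ (M := ℝ) fun x : Fin n → ℝ => _]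
  exact setIntegral_indicator_eq_betaEnsemble_real (T := Set.Ioo (-1) 1)
    (w := fun u => (1 - u ^ 2) ^ a) measurableSet_Ioo (by fun_prop)
    (fun _ => one_sub_sq_rpow_nonneg) n 1 .univ

lemma integral_jueGapIntegrand (c : ℝ) (k : ℕ) :
    ∫ y in {y : Fin m → ℝ | ∀ i, 0 < y i ∧ y i < 1}, jueGapIntegrand m μ a c k y =
      (betaEnsemble (unitaryJacobiMeasure a μ) m 2).real {y | countBelow c y = k} := by
  rw [jueGapIntegrand_eq_indicator, jueTotalIntegrand_eq]
  exact setIntegral_indicator_eq_betaEnsemble_real (T := Set.Ioo 0 1)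
    (w := fun u => u ^ ((μ : ℝ) - 1 / 2) * (1 - u) ^ (2 * a + 1)) measurableSet_Ioo (by fun_prop)
    (fun _ => rpow_mul_one_sub_rpow_nonneg _ _) m 2 (measurableSet_countBelow_eq c k)

lemma integral_jueTotalIntegrand :
    ∫ y in {y : Fin m → ℝ | ∀ i, 0 < y i ∧ y i < 1}, jueTotalIntegrand m μ a y =
      (betaEnsemble (unitaryJacobiMeasure a μ) m 2).real Set.univ := by
  rw [jueTotalIntegrand_eq, ← Set.indicator_univ (M := ℝ) fun y : Fin m → ℝ => _]
  exact setIntegral_indicator_eq_betaEnsemble_real (T := Set.Ioo 0 1)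
    (w := fun u => u ^ ((μ : ℝ) - 1 / 2) * (1 - u) ^ (2 * a + 1)) measurableSet_Ioo (by fun_prop)
    (fun _ => rpow_mul_one_sub_rpow_nonneg _ _) m 2 .univ

end Integrands

section Ratio

variable {X Y : Type*} [MeasurableSpace X] [MeasurableSpace Y] {ρ : Measure X} {ρ' : Measure Y}

lemma isFiniteMeasure_and_neZero_of_map_eq_smul_map {Z : Type*} [MeasurableSpace Z]
    [IsFiniteMeasure ρ] [NeZero ρ] {f : X → Z} {g : Y → Z} (hf : Measurable f) (hg : Measurable g)
    {C : ℝ≥0∞} (h : ρ.map f = C • ρ'.map g) : IsFiniteMeasure ρ' ∧ NeZero ρ' := by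
  have hmass : ρ Set.univ = C * ρ' Set.univ := by
    simpa [Measure.map_apply hf, Measure.map_apply hg] using congr($h Set.univ)
  have hC : C ≠ 0 ∧ ρ' Set.univ ≠ 0 := by
    rw [← mul_ne_zero_iff, ← hmass]
    exact NeZero.ne _
  have hfin : C * ρ' Set.univ ≠ ∞ := hmass ▸ measure_ne_top ρ _
  exact ⟨⟨(ENNReal.lt_top_of_mul_ne_top_right hfin hC.1)⟩,
    ⟨Measure.measure_univ_ne_zero.1 hC.2⟩⟩

lemma real_preimage_div_real_univ_of_map_eq_smul_map {Z : Type*} [MeasurableSpace Z]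
    [IsFiniteMeasure ρ] [NeZero ρ] {f : X → Z} {g : Y → Z} (hf : Measurable f) (hg : Measurable g)
    {C : ℝ≥0∞} (h : ρ.map f = C • ρ'.map g) {A : Set Z} (hA : MeasurableSet A) :
    ρ.real (f ⁻¹' A) / ρ.real Set.univ = ρ'.real (g ⁻¹' A) / ρ'.real Set.univ := by
  have hscale {B : Set Z} (hB : MeasurableSet B) :
      ρ.real (f ⁻¹' B) = C.toReal * ρ'.real (g ⁻¹' B) := by
    rw [← map_measureReal_apply hf hB, h, measureReal_ennreal_smul_apply,
      map_measureReal_apply hg hB]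
  have huniv : ρ.real Set.univ = C.toReal * ρ'.real Set.univ := hscale .univ
  have hC : C.toReal ≠ 0 := fun h0 => by simp [h0, measureReal_univ_pos.ne'] at huniv
  rw [hscale hA, huniv, mul_div_mul_left _ _ hC]

lemma real_add_real_eq_real_half [IsFiniteMeasure ρ] {N : X → ℕ} (hN : Measurable N) {μ : ℕ}
    (hμ : μ ≤ 1) (k : ℕ) :
    ρ.real {x | (N x : ℤ) = 2 * k + μ - 1} + ρ.real {x | (N x : ℤ) = 2 * k + μ} =
      ρ.real ((fun x => (N x + 1 - μ) / 2) ⁻¹' {k}) := by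
  have hmeas : MeasurableSet {x | (N x : ℤ) = 2 * k + μ} :=
    hN (MeasurableSet.of_discrete (s := {i : ℕ | (i : ℤ) = 2 * k + μ}))
  have hdisj : Disjoint {x | (N x : ℤ) = 2 * k + μ - 1} {x | (N x : ℤ) = 2 * k + μ} :=
    Set.disjoint_left.2 fun x hx hx' => by
      simp only [Set.mem_ofPred_eq] at hx hx'
      omega
  rw [← measureReal_union hdisj hmeas]
  congr 1
  ext x
  simp only [Set.mem_union, Set.mem_ofPred_eq, Set.mem_preimage, Set.mem_singleton_iff]
  omega

end Ratio

/-- symmetric Jacobi case of Theorem 6.1: the gap probabilities of the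
`n × n` symmetric Jacobi OE on `(-1,1)` and of the `m × m` Jacobi UE on `(0,1)` satisfy
`(A_{2k+μ-1} + A_{2k+μ})/Z₁ = B_k/Z₂`; all the integrals are finite and `Z₁, Z₂ > 0`. -/
theorem jacobi_gap_probability (a : ℝ) (ha : -1 < a) (μ m n : ℕ) (hμ : μ = 0 ∨ μ = 1)
    (hm : 1 ≤ m) (hn : n = 2 * m + μ) (k : ℕ) (s : ℝ) (hs0 : 0 < s) (hs1 : s < 1) :
    (∀ j : ℤ, IntegrableOn (joeGapIntegrand n a s j)
      {x : Fin n → ℝ | ∀ i, -1 < x i ∧ x i < 1}) ∧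
    IntegrableOn (joeTotalIntegrand n a) {x : Fin n → ℝ | ∀ i, -1 < x i ∧ x i < 1} ∧
    IntegrableOn (jueGapIntegrand m μ a (s ^ 2) k)
      {y : Fin m → ℝ | ∀ i, 0 < y i ∧ y i < 1} ∧
    IntegrableOn (jueTotalIntegrand m μ a) {y : Fin m → ℝ | ∀ i, 0 < y i ∧ y i < 1} ∧
    (0 < ∫ x in {x : Fin n → ℝ | ∀ i, -1 < x i ∧ x i < 1}, joeTotalIntegrand n a x) ∧
    (0 < ∫ y in {y : Fin m → ℝ | ∀ i, 0 < y i ∧ y i < 1}, jueTotalIntegrand m μ a y) ∧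
    ((∫ x in {x : Fin n → ℝ | ∀ i, -1 < x i ∧ x i < 1},
          joeGapIntegrand n a s (2 * (k : ℤ) + (μ : ℤ) - 1) x) +
        ∫ x in {x : Fin n → ℝ | ∀ i, -1 < x i ∧ x i < 1},
          joeGapIntegrand n a s (2 * (k : ℤ) + (μ : ℤ)) x) /
      (∫ x in {x : Fin n → ℝ | ∀ i, -1 < x i ∧ x i < 1}, joeTotalIntegrand n a x) =
    (∫ y in {y : Fin m → ℝ | ∀ i, 0 < y i ∧ y i < 1}, jueGapIntegrand m μ a (s ^ 2) k y) /
      (∫ y in {y : Fin m → ℝ | ∀ i, 0 < y i ∧ y i < 1}, jueTotalIntegrand m μ a y) := by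
  subst hn
  have hμ1 : μ ≤ 1 := by omega
  obtain ⟨C, hmap⟩ := exists_map_countBelow_jacobiOrthogonal m hμ1 ha hs0.le
  have hN : Measurable fun x : Fin (2 * m + μ) → ℝ => countBelow s |x| :=
    (measurable_countBelow s).comp measurable_abs_pi
  have hhalf : Measurable fun x : Fin (2 * m + μ) → ℝ => (countBelow s |x| + 1 - μ) / 2 :=
    (Measurable.of_discrete (f := fun N => (N + 1 - μ) / 2)).comp hN
  have hJ := isFiniteMeasure_jacobiMeasure ha
  have hO : IsFiniteMeasure (betaEnsemble (jacobiMeasure a) (2 * m + μ) 1) :=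
    isFiniteMeasure_betaEnsemble (ae_mem_Ioo_jacobiMeasure.mono fun _ h => ⟨h.1.le, h.2.le⟩) _ _
  have hO0 := neZero_betaEnsemble (ρ := jacobiMeasure a) (2 * m + μ) 1
  obtain ⟨hU, hU0⟩ :=
    isFiniteMeasure_and_neZero_of_map_eq_smul_map hhalf (measurable_countBelow _) hmap
  refine ⟨integrableOn_joeGapIntegrand hO s, integrableOn_joeTotalIntegrand hO,
    integrableOn_jueGapIntegrand hU _ k, integrableOn_jueTotalIntegrand hU, ?_, ?_, ?_⟩
  · exact integral_joeTotalIntegrand ▸ measureReal_univ_pos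
  · exact integral_jueTotalIntegrand ▸ measureReal_univ_pos
  · simp only [integral_joeGapIntegrand, integral_joeTotalIntegrand, integral_jueGapIntegrand,
      integral_jueTotalIntegrand]
    rw [real_add_real_eq_real_half hN hμ1]
    exact real_preimage_div_real_univ_of_map_eq_smul_map hhalf (measurable_countBelow _) hmap
      (measurableSet_singleton k)
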